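/- Differential inequality for the trace (Corollary 3.7 in coordinates): let (g, β) be a smooth solution of the coordinate pluriclosed flow on I×U (i.e. g Hermitian positive definite, β antisymmetric, β(t,·) a torsion potential for g(t,·), ∂ₜg_{ij̄} = −S^g_{ij̄} + T²_{ij̄}, ∂ₜβ_{ij} = Δ_gβ_{ij}), with generalized metric G := G(g,β), and let G̃ := G(g̃,β̃) be the generalized metric of a fixed smooth background (g̃, β̃) on U. Fix Λ ≥ 1 and suppose Λ⁻¹·G̃ ≤ G ≤ Λ·G̃ (Loewner order) on I×U. Then there exists a constant K, depending only on n, Λ, and upper bounds on U for the entries of g̃, g̃⁻¹, β̃ and their Wirtinger derivatives up to order two, such that (∂ₜ − Δ)(tr(G⁻¹·G̃)) ≤ −Λ⁻¹·|Υ|²_{g⁻¹,G⁻¹,G} + K on I×U, where Δ := Σ g^{n̄m}·∂_m∂_{n̄} and Υ is the difference of the Chern connections of G and G̃. -/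

import Mathlib

open Matrix
open scoped ComplexOrder

noncomputable section

/-- Spatial Wirtinger derivative `∂ᵢ f = ½(∂f/∂xᵢ − i·∂f/∂yᵢ)` of `f : ℝ × ℂⁿ → ℂ`,
computed via the real Fréchet derivative in the spatial directions. -/
def wdP {n : ℕ} (i : Fin n) (f : ℝ × (Fin n → ℂ) → ℂ) (p : ℝ × (Fin n → ℂ)) : ℂ :=
  (fderiv ℝ f p (0, Pi.single i 1) - Complex.I * fderiv ℝ f p (0, Pi.single i Complex.I)) / 2

/-- Spatial conjugate Wirtinger derivative `∂_{ī} f = ½(∂f/∂xᵢ + i·∂f/∂yᵢ)`. -/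
def wdbP {n : ℕ} (i : Fin n) (f : ℝ × (Fin n → ℂ) → ℂ) (p : ℝ × (Fin n → ℂ)) : ℂ :=
  (fderiv ℝ f p (0, Pi.single i 1) + Complex.I * fderiv ℝ f p (0, Pi.single i Complex.I)) / 2

/-- Time derivative `∂ₜ f` of `f : ℝ × ℂⁿ → ℂ`. -/
def dtP {n : ℕ} (f : ℝ × (Fin n → ℂ) → ℂ) (p : ℝ × (Fin n → ℂ)) : ℂ :=
  fderiv ℝ f p (1, 0)

/-- Entrywise spatial Wirtinger derivative of a matrix-valued map. -/
def wdPM {n : ℕ} {ι κ : Type*} (i : Fin n) (A : ℝ × (Fin n → ℂ) → Matrix ι κ ℂ)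
    (p : ℝ × (Fin n → ℂ)) : Matrix ι κ ℂ :=
  Matrix.of fun a b => wdP i (fun q => A q a b) p

/-- Entrywise spatial conjugate Wirtinger derivative of a matrix-valued map. -/
def wdbPM {n : ℕ} {ι κ : Type*} (i : Fin n) (A : ℝ × (Fin n → ℂ) → Matrix ι κ ℂ)
    (p : ℝ × (Fin n → ℂ)) : Matrix ι κ ℂ :=
  Matrix.of fun a b => wdbP i (fun q => A q a b) p

/-- Entrywise time derivative of a matrix-valued map. -/
def dtPM {n : ℕ} {ι κ : Type*} (A : ℝ × (Fin n → ℂ) → Matrix ι κ ℂ)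
    (p : ℝ × (Fin n → ℂ)) : Matrix ι κ ℂ :=
  Matrix.of fun a b => dtP (fun q => A q a b) p

/-- The generalized metric associated to a Hermitian metric `g` and a `(2,0)`-form
(antisymmetric matrix) `β`, as a `2n × 2n` block matrix on `T ⊕ T*`. -/
def genMetric {n : ℕ} (g β : Matrix (Fin n) (Fin n) ℂ) :
    Matrix (Fin n ⊕ Fin n) (Fin n ⊕ Fin n) ℂ :=
  Matrix.fromBlocks (g + β * (g⁻¹).map (starRingEnd ℂ) * βᴴ) (β * (g⁻¹).map (starRingEnd ℂ))
    ((g⁻¹).map (starRingEnd ℂ) * βᴴ) ((g⁻¹).map (starRingEnd ℂ))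

/-- Lowered Chern curvature `Ω^h_{ij̄αβ̄} = −∂ᵢ∂_{j̄}h_{αβ̄} + Σ ∂ᵢh_{αγ̄}·h^{γ̄δ}·∂_{j̄}h_{δβ̄}`
of a (time-dependent) Hermitian matrix field `h`, where `h^{γ̄δ} = (h⁻¹) γ δ`. -/
def chernP {n : ℕ} {ι : Type*} [Fintype ι] [DecidableEq ι]
    (h : ℝ × (Fin n → ℂ) → Matrix ι ι ℂ) (i j : Fin n) (a b : ι) (p : ℝ × (Fin n → ℂ)) : ℂ :=
  - wdP i (fun q => wdbP j (fun r => h r a b) q) p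
    + ∑ c : ι, ∑ d : ι, wdP i (fun q => h q a c) p * (h p)⁻¹ c d * wdbP j (fun q => h q d b) p

/-- Chern torsion `T_{ijk̄} = ∂ᵢ g_{jk̄} − ∂ⱼ g_{ik̄}`. -/
def torsionP {n : ℕ} (g : ℝ × (Fin n → ℂ) → Matrix (Fin n) (Fin n) ℂ)
    (i j k : Fin n) (p : ℝ × (Fin n → ℂ)) : ℂ :=
  wdP i (fun q => g q j k) p - wdP j (fun q => g q i k) p

/-- Trace with respect to `g` of the lowered Chern curvature of `h`:
`Σ g^{j̄i}·Ω^h_{ij̄ab̄}`. -/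
def traceChernP {n : ℕ} {ι : Type*} [Fintype ι] [DecidableEq ι]
    (g : ℝ × (Fin n → ℂ) → Matrix (Fin n) (Fin n) ℂ)
    (h : ℝ × (Fin n → ℂ) → Matrix ι ι ℂ) (a b : ι) (p : ℝ × (Fin n → ℂ)) : ℂ :=
  ∑ i : Fin n, ∑ j : Fin n, (g p)⁻¹ j i * chernP h i j a b p

/-- `T²_{ab̄} = Σ T_{aln̄}·conj(T_{bkm̄})·g^{k̄l}·g^{n̄m}`. -/
def torsionSqP {n : ℕ} (g : ℝ × (Fin n → ℂ) → Matrix (Fin n) (Fin n) ℂ)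
    (a b : Fin n) (p : ℝ × (Fin n → ℂ)) : ℂ :=
  ∑ k : Fin n, ∑ l : Fin n, ∑ m : Fin n, ∑ m' : Fin n,
    torsionP g a l m' p * (starRingEnd ℂ) (torsionP g b k m p) * (g p)⁻¹ k l * (g p)⁻¹ m' m

/-- Second Chern covariant derivative
`∇ᵢ∇_{j̄}β_{ab} = ∂ᵢ∂_{j̄}β_{ab} − Σ g^{k̄l}·∂ᵢg_{ak̄}·∂_{j̄}β_{lb} − Σ g^{k̄l}·∂ᵢg_{bk̄}·∂_{j̄}β_{al}`. -/
def nabla2betaP {n : ℕ} (g β : ℝ × (Fin n → ℂ) → Matrix (Fin n) (Fin n) ℂ)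
    (i j a b : Fin n) (p : ℝ × (Fin n → ℂ)) : ℂ :=
  wdP i (fun q => wdbP j (fun r => β r a b) q) p
    - ∑ k : Fin n, ∑ l : Fin n,
        (g p)⁻¹ k l * wdP i (fun q => g q a k) p * wdbP j (fun q => β q l b) p
    - ∑ k : Fin n, ∑ l : Fin n,
        (g p)⁻¹ k l * wdP i (fun q => g q b k) p * wdbP j (fun q => β q a l) p

/-- `Δ_g β_{ab} = Σ g^{j̄i}·∇ᵢ∇_{j̄}β_{ab}`. -/
def lapBetaP {n : ℕ} (g β : ℝ × (Fin n → ℂ) → Matrix (Fin n) (Fin n) ℂ)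
    (a b : Fin n) (p : ℝ × (Fin n → ℂ)) : ℂ :=
  ∑ i : Fin n, ∑ j : Fin n, (g p)⁻¹ j i * nabla2betaP g β i j a b p


/-- The Wirtinger derivative `∂ᵢ f` of a function `f : ℂⁿ → ℂ`. -/
def wd {n : ℕ} (i : Fin n) (f : (Fin n → ℂ) → ℂ) (z : Fin n → ℂ) : ℂ :=
  (fderiv ℝ f z (Pi.single i 1) - Complex.I * fderiv ℝ f z (Pi.single i Complex.I)) / 2

/-- The conjugate Wirtinger derivative `∂_{ī} f` of a function `f : ℂⁿ → ℂ`. -/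
def wdb {n : ℕ} (i : Fin n) (f : (Fin n → ℂ) → ℂ) (z : Fin n → ℂ) : ℂ :=
  (fderiv ℝ f z (Pi.single i 1) + Complex.I * fderiv ℝ f z (Pi.single i Complex.I)) / 2


/-- The Laplacian `Δ f = Σ g^{n̄m}·∂_m∂_{n̄} f` associated to `g`. -/
def lapP {n : ℕ} (g : ℝ × (Fin n → ℂ) → Matrix (Fin n) (Fin n) ℂ)
    (f : ℝ × (Fin n → ℂ) → ℂ) (p : ℝ × (Fin n → ℂ)) : ℂ :=
  ∑ m' : Fin n, ∑ n' : Fin n, (g p)⁻¹ n' m' * wdP m' (fun q => wdbP n' f q) p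

/-- Difference of Chern connections `Υᵢ{}_A{}^D = Σ_C (∂ᵢG_{AC̄}·G^{C̄D} − ∂ᵢG̃_{AC̄}·G̃^{C̄D})`. -/
def UpsP {n : ℕ} {ι : Type*} [Fintype ι] [DecidableEq ι]
    (G Gt : ℝ × (Fin n → ℂ) → Matrix ι ι ℂ) (i : Fin n) (A D : ι)
    (p : ℝ × (Fin n → ℂ)) : ℂ :=
  ∑ C : ι, (wdP i (fun q => G q A C) p * (G p)⁻¹ C D
    - wdP i (fun q => Gt q A C) p * (Gt p)⁻¹ C D)

/-- `|Υ|²_{g⁻¹,G⁻¹,H} = Σ g^{j̄i}·G^{B̄A}·H_{DĒ}·Υᵢ{}_A{}^D·conj(Υⱼ{}_B{}^E)`. -/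
def upsNormP {n : ℕ} {ι : Type*} [Fintype ι] [DecidableEq ι]
    (g : ℝ × (Fin n → ℂ) → Matrix (Fin n) (Fin n) ℂ)
    (G Gt H : ℝ × (Fin n → ℂ) → Matrix ι ι ℂ) (p : ℝ × (Fin n → ℂ)) : ℂ :=
  ∑ i : Fin n, ∑ j : Fin n, ∑ A : ι, ∑ B : ι, ∑ D : ι, ∑ E : ι,
    (g p)⁻¹ j i * (G p)⁻¹ B A * H p D E * UpsP G Gt i A D p *
      (starRingEnd ℂ) (UpsP G Gt j B E p)

/-- `f` and its Wirtinger derivatives up to order two are bounded by `B` at `z`. -/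
def BoundedDerivs2 {n : ℕ} (B : ℝ) (f : (Fin n → ℂ) → ℂ) (z : Fin n → ℂ) : Prop :=
  ‖f z‖ ≤ B ∧ (∀ i : Fin n, ‖wd i f z‖ ≤ B ∧ ‖wdb i f z‖ ≤ B) ∧
    (∀ i j : Fin n, ‖wd i (wd j f) z‖ ≤ B ∧ ‖wd i (wdb j f) z‖ ≤ B ∧
      ‖wdb i (wd j f) z‖ ≤ B ∧ ‖wdb i (wdb j f) z‖ ≤ B)

/-!
Pluriclosed flow is the flow of the generalized metric `G` by the `g`-trace of its own Chern
curvature. The curvature of `G` therefore cancels in `(∂ₜ − Δ) tr(G⁻¹G̃)`, leaving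
`−|Υ|²_{g⁻¹,G⁻¹,G̃}`, which `G ≤ Λ·G̃` compares with `−Λ⁻¹|Υ|²_{g⁻¹,G⁻¹,G}`, and the trace of
`G⁻¹·Ω^{G̃}` with respect to `g`. The latter is bounded: `G ≤ Λ·G̃` bounds the entries of `G`, among
which are those of `ḡ⁻¹`, and `G⁻¹` has the same entries as `G` because the antisymmetry of `β`
makes `G` orthogonal for the natural pairing on `T ⊕ T*`.
-/

open scoped Topology ContDiff

/-- The complex conjugate of the tangent vector `ξ.1 + i ξ.2`. -/
def conjDir {E : Type*} [Neg E] (ξ : E × E) : E × E := (ξ.1, -ξ.2)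

@[simp]
lemma conjDir_conjDir {E : Type*} [InvolutiveNeg E] (ξ : E × E) : conjDir (conjDir ξ) = ξ := by
  simp [conjDir]

section DirectionalDerivative

variable {E F V W : Type*} [NormedAddCommGroup E] [NormedSpace ℝ E]
  [NormedAddCommGroup F] [NormedSpace ℝ F]
  [NormedAddCommGroup V] [NormedSpace ℂ V] [NormedAddCommGroup W] [NormedSpace ℂ W]
  {f g : E → V} {p : E}

/-- The derivative of `f` along the complex tangent vector `ξ.1 + i ξ.2`; the Wirtinger and time
derivatives are instances of it. -/
def dirDeriv (ξ : E × E) (f : E → V) (p : E) : V :=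
  fderiv ℝ f p ξ.1 + Complex.I • fderiv ℝ f p ξ.2

lemma dirDeriv_congr (ξ : E × E) (h : f =ᶠ[𝓝 p] g) : dirDeriv ξ f p = dirDeriv ξ g p := by
  simp only [dirDeriv, h.fderiv_eq (𝕜 := ℝ)]

@[simp]
lemma dirDeriv_const (ξ : E × E) (c : V) : dirDeriv ξ (fun _ : E => c) p = 0 := by
  simp [dirDeriv]

lemma dirDeriv_neg (ξ : E × E) : dirDeriv ξ (fun q => -f q) p = -dirDeriv ξ f p := by
  simp only [dirDeriv, fderiv_fun_neg, _root_.neg_apply, smul_neg, neg_add]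

lemma dirDeriv_sub (ξ : E × E) (hf : DifferentiableAt ℝ f p) (hg : DifferentiableAt ℝ g p) :
    dirDeriv ξ (fun q => f q - g q) p = dirDeriv ξ f p - dirDeriv ξ g p := by
  simp only [dirDeriv, fderiv_fun_sub hf hg, _root_.sub_apply, smul_sub]
  abel

lemma dirDeriv_clm_comp (ξ : E × E) (L : V →L[ℂ] W) (hf : DifferentiableAt ℝ f p) :
    dirDeriv ξ (fun q => L (f q)) p = L (dirDeriv ξ f p) := by
  have hL : fderiv ℝ (fun q => L (f q)) p = (L.restrictScalars ℝ).comp (fderiv ℝ f p) :=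
    ((L.restrictScalars ℝ).hasFDerivAt.comp p hf.hasFDerivAt).fderiv
  simp [dirDeriv, hL]

lemma dirDeriv_comp_clm (ξ : F × F) (L : F →L[ℝ] E) {q : F} (hf : DifferentiableAt ℝ f (L q)) :
    dirDeriv ξ (fun r => f (L r)) q = dirDeriv (L ξ.1, L ξ.2) f (L q) := by
  have hL : fderiv ℝ (fun r => f (L r)) q = (fderiv ℝ f (L q)).comp L :=
    (hf.hasFDerivAt.comp q L.hasFDerivAt).fderiv
  simp [dirDeriv, hL]

lemma dirDeriv_star [StarAddMonoid V] [NormedStarGroup V] [StarModule ℂ V] (ξ : E × E) :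
    dirDeriv ξ (fun q => star (f q)) p = star (dirDeriv (conjDir ξ) f p) := by
  simp [dirDeriv, conjDir, fderiv_star]

lemma contDiffAt_dirDeriv (ξ : E × E) {m n : WithTop ℕ∞} (hf : ContDiffAt ℝ n f p)
    (hmn : m + 1 ≤ n) : ContDiffAt ℝ m (dirDeriv ξ f) p := by
  have hf' := hf.fderiv_right hmn
  exact (hf'.clm_apply contDiffAt_const).add
    ((hf'.clm_apply contDiffAt_const).const_smul Complex.I)

lemma differentiableAt_dirDeriv (ξ : E × E) (hf : ContDiffAt ℝ 2 f p) :
    DifferentiableAt ℝ (dirDeriv ξ f) p :=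
  (contDiffAt_dirDeriv ξ hf one_add_one_eq_two.le).differentiableAt one_ne_zero

lemma dirDeriv_dirDeriv (ξ η : E × E) (hf : ContDiffAt ℝ 2 f p) :
    dirDeriv ξ (dirDeriv η f) p =
      fderiv ℝ (fderiv ℝ f) p ξ.1 η.1 - fderiv ℝ (fderiv ℝ f) p ξ.2 η.2
        + Complex.I • (fderiv ℝ (fderiv ℝ f) p ξ.1 η.2 + fderiv ℝ (fderiv ℝ f) p ξ.2 η.1) := by
  have hd : DifferentiableAt ℝ (fderiv ℝ f) p :=
    (hf.fderiv_right (m := 1) (by norm_num)).differentiableAt one_ne_zero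
  have happ (u : E) : HasFDerivAt (fun q => fderiv ℝ f q u)
      ((fderiv ℝ (fderiv ℝ f) p).flip u) p := by
    simpa using hd.hasFDerivAt.clm_apply (hasFDerivAt_const u p)
  have hη : fderiv ℝ (dirDeriv η f) p = (fderiv ℝ (fderiv ℝ f) p).flip η.1
      + Complex.I • (fderiv ℝ (fderiv ℝ f) p).flip η.2 :=
    ((happ η.1).add ((happ η.2).const_smul Complex.I)).fderiv
  simp only [dirDeriv, hη, _root_.add_apply, _root_.smul_apply,
    ContinuousLinearMap.flip_apply, smul_add, smul_smul, Complex.I_mul_I, neg_one_smul]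
  abel

lemma dirDeriv_comm (ξ η : E × E) (hf : ContDiffAt ℝ 2 f p) :
    dirDeriv ξ (dirDeriv η f) p = dirDeriv η (dirDeriv ξ f) p := by
  have hsymm : IsSymmSndFDerivAt ℝ f p := hf.isSymmSndFDerivAt (by simp)
  rw [dirDeriv_dirDeriv ξ η hf, dirDeriv_dirDeriv η ξ hf, hsymm.eq ξ.1 η.1, hsymm.eq ξ.2 η.2,
    hsymm.eq ξ.1 η.2, hsymm.eq ξ.2 η.1, add_comm (fderiv ℝ (fderiv ℝ f) p η.2 ξ.1)]

lemma dirDeriv_mul {R : Type*} [NormedRing R] [NormedAlgebra ℂ R] {f g : E → R} (ξ : E × E)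
    (hf : DifferentiableAt ℝ f p) (hg : DifferentiableAt ℝ g p) :
    dirDeriv ξ (fun q => f q * g q) p = dirDeriv ξ f p * g p + f p * dirDeriv ξ g p := by
  simp [dirDeriv, fderiv_fun_mul' hf hg, smul_add, add_mul, mul_add]
  abel

end DirectionalDerivative

section MatrixDifferentiability

variable {E ι κ : Type*} [NormedAddCommGroup E] [NormedSpace ℝ E] {p : E} [Finite ι] [Finite κ]

lemma differentiableAt_matrix_iff {A : E → Matrix ι κ ℂ} :
    DifferentiableAt ℝ A p ↔ ∀ a b, DifferentiableAt ℝ (fun q => A q a b) p := by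
  cases nonempty_fintype ι
  cases nonempty_fintype κ
  exact differentiableAt_pi.trans (forall_congr' fun a => differentiableAt_pi)

lemma differentiableAt_transpose {A : E → Matrix ι κ ℂ} (hA : DifferentiableAt ℝ A p) :
    DifferentiableAt ℝ (fun q => (A q)ᵀ) p :=
  differentiableAt_matrix_iff.mpr fun a b => differentiableAt_matrix_iff.mp hA b a

lemma differentiableAt_conjTranspose {A : E → Matrix ι κ ℂ} (hA : DifferentiableAt ℝ A p) :
    DifferentiableAt ℝ (fun q => (A q)ᴴ) p :=
  differentiableAt_matrix_iff.mpr fun a b => (differentiableAt_matrix_iff.mp hA b a).star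

lemma differentiableAt_fromBlocks {ι' κ' : Type*} [Finite ι'] [Finite κ']
    {A₁₁ : E → Matrix ι κ ℂ} {A₁₂ : E → Matrix ι κ' ℂ} {A₂₁ : E → Matrix ι' κ ℂ}
    {A₂₂ : E → Matrix ι' κ' ℂ} (h₁₁ : DifferentiableAt ℝ A₁₁ p) (h₁₂ : DifferentiableAt ℝ A₁₂ p)
    (h₂₁ : DifferentiableAt ℝ A₂₁ p) (h₂₂ : DifferentiableAt ℝ A₂₂ p) :
    DifferentiableAt ℝ (fun q => fromBlocks (A₁₁ q) (A₁₂ q) (A₂₁ q) (A₂₂ q)) p := by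
  rw [differentiableAt_matrix_iff] at *
  rintro (a | a) (b | b) <;> simp only [fromBlocks_apply₁₁, fromBlocks_apply₁₂,
    fromBlocks_apply₂₁, fromBlocks_apply₂₂, *]

end MatrixDifferentiability

section MatrixField

open scoped Matrix.Norms.L2Operator

variable {E ι κ : Type*} [NormedAddCommGroup E] [NormedSpace ℝ E] {p : E}
  [Fintype ι] [Fintype κ] [DecidableEq κ]

lemma contDiffAt_matrix_iff {A : E → Matrix ι κ ℂ} {m : WithTop ℕ∞} :
    ContDiffAt ℝ m A p ↔ ∀ a b, ContDiffAt ℝ m (fun q => A q a b) p := by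
  let e := (Matrix.ofLinearEquiv (m := ι) (n := κ) (α := ℂ) ℝ).symm.toContinuousLinearEquiv
  rw [← e.comp_contDiffAt_iff, contDiffAt_pi]
  simp only [contDiffAt_pi]
  rfl

lemma dirDeriv_apply_apply {A : E → Matrix ι κ ℂ} (ξ : E × E) (hA : DifferentiableAt ℝ A p)
    (a : ι) (b : κ) : dirDeriv ξ A p a b = dirDeriv ξ (fun q => A q a b) p :=
  (dirDeriv_clm_comp ξ (Matrix.entryLinearMap ℂ ℂ a b).toContinuousLinearMap hA).symm

lemma dirDeriv_dirDeriv_apply_apply {A : E → Matrix ι κ ℂ} (ξ η : E × E) (hA : ContDiffAt ℝ 2 A p)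
    (a : ι) (b : κ) :
    dirDeriv ξ (dirDeriv η A) p a b = dirDeriv ξ (dirDeriv η fun q => A q a b) p := by
  rw [dirDeriv_apply_apply ξ (differentiableAt_dirDeriv η hA)]
  refine dirDeriv_congr ξ ((hA.eventually (by simp)).mono fun q hq => ?_)
  exact dirDeriv_apply_apply η (hq.differentiableAt two_ne_zero) a b

variable [DecidableEq ι] {A : E → Matrix ι ι ℂ}

lemma dirDeriv_transpose (ξ : E × E) (hA : DifferentiableAt ℝ A p) :
    dirDeriv ξ (fun q => (A q)ᵀ) p = (dirDeriv ξ A p)ᵀ :=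
  dirDeriv_clm_comp ξ (Matrix.transposeLinearEquiv ι ι ℂ ℂ).toLinearMap.toContinuousLinearMap hA

lemma dirDeriv_trace (ξ : E × E) (hA : DifferentiableAt ℝ A p) :
    dirDeriv ξ (fun q => (A q).trace) p = (dirDeriv ξ A p).trace :=
  dirDeriv_clm_comp ξ (Matrix.traceLinearMap ι ℂ ℂ).toContinuousLinearMap hA

lemma dirDeriv_conjTranspose (ξ : E × E) :
    dirDeriv ξ (fun q => (A q)ᴴ) p = (dirDeriv (conjDir ξ) A p)ᴴ :=
  dirDeriv_star ξ

lemma contDiffAt_matrix_inv {m : WithTop ℕ∞} (hA : ContDiffAt ℝ m A p) (hu : IsUnit (A p)) :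
    ContDiffAt ℝ m (fun q => (A q)⁻¹) p := by
  obtain ⟨u, hu⟩ := hu
  simp only [Matrix.nonsing_inv_eq_ringInverse]
  exact ContDiffAt.comp p (hu ▸ contDiffAt_ringInverse ℝ u) hA

lemma differentiableAt_matrix_inv (hA : DifferentiableAt ℝ A p) (hu : IsUnit (A p)) :
    DifferentiableAt ℝ (fun q => (A q)⁻¹) p := by
  simpa only [Matrix.nonsing_inv_eq_ringInverse] using hA.inverse hu

lemma dirDeriv_inv (ξ : E × E) (hA : DifferentiableAt ℝ A p) (hu : IsUnit (A p)) :
    dirDeriv ξ (fun q => (A q)⁻¹) p = -((A p)⁻¹ * dirDeriv ξ A p * (A p)⁻¹) := by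
  obtain ⟨u, hu⟩ := hu
  have hinv := (hu ▸ hasFDerivAt_ringInverse (𝕜 := ℝ) u).comp p hA.hasFDerivAt
  simp only [Function.comp_def, ← Matrix.nonsing_inv_eq_ringInverse] at hinv
  simp [dirDeriv, hinv.fderiv, ← hu, mul_add, add_mul, mul_assoc]
  abel

lemma contDiffAt_conjTranspose {m : WithTop ℕ∞} (hA : ContDiffAt ℝ m A p) :
    ContDiffAt ℝ m (fun q => (A q)ᴴ) p :=
  (starL' ℝ : Matrix ι ι ℂ ≃L[ℝ] Matrix ι ι ℂ).contDiff.contDiffAt.comp p hA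

lemma contDiffAt_transpose {m : WithTop ℕ∞} (hA : ContDiffAt ℝ m A p) :
    ContDiffAt ℝ m (fun q => (A q)ᵀ) p :=
  contDiffAt_matrix_iff.mpr fun a b => contDiffAt_matrix_iff.mp hA b a

lemma contDiffAt_fromBlocks {m : WithTop ℕ∞} {A₁₁ A₁₂ A₂₁ A₂₂ : E → Matrix ι ι ℂ}
    (h₁₁ : ContDiffAt ℝ m A₁₁ p) (h₁₂ : ContDiffAt ℝ m A₁₂ p) (h₂₁ : ContDiffAt ℝ m A₂₁ p)
    (h₂₂ : ContDiffAt ℝ m A₂₂ p) :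
    ContDiffAt ℝ m (fun q => fromBlocks (A₁₁ q) (A₁₂ q) (A₂₁ q) (A₂₂ q)) p := by
  rw [contDiffAt_matrix_iff] at *
  rintro (a | a) (b | b) <;> simp only [fromBlocks_apply₁₁, fromBlocks_apply₁₂, fromBlocks_apply₂₁,
    fromBlocks_apply₂₂, *]

lemma dirDeriv_fromBlocks (ξ : E × E) {A₁₁ A₁₂ A₂₁ A₂₂ : E → Matrix ι ι ℂ}
    (h₁₁ : DifferentiableAt ℝ A₁₁ p) (h₁₂ : DifferentiableAt ℝ A₁₂ p)
    (h₂₁ : DifferentiableAt ℝ A₂₁ p) (h₂₂ : DifferentiableAt ℝ A₂₂ p) :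
    dirDeriv ξ (fun q => fromBlocks (A₁₁ q) (A₁₂ q) (A₂₁ q) (A₂₂ q)) p =
      fromBlocks (dirDeriv ξ A₁₁ p) (dirDeriv ξ A₁₂ p) (dirDeriv ξ A₂₁ p) (dirDeriv ξ A₂₂ p) := by
  have hA := differentiableAt_fromBlocks h₁₁ h₁₂ h₂₁ h₂₂
  ext (a | a) (b | b) <;> simp only [dirDeriv_apply_apply ξ, fromBlocks_apply₁₁, fromBlocks_apply₁₂,
    fromBlocks_apply₂₁, fromBlocks_apply₂₂, *]

end MatrixField

section ChernCurvature

open scoped Matrix.Norms.L2Operator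

variable {E ι : Type*} [NormedAddCommGroup E] [NormedSpace ℝ E] [Fintype ι] [DecidableEq ι]
  {G H : E → Matrix ι ι ℂ} {p : E}

/-- The lowered Chern curvature `−∂_ξ∂_η h + ∂_ξ h · h⁻¹ · ∂_η h` of a Hermitian matrix field, in
complex directions `ξ`, `η`. -/
def chernCurv (ξ η : E × E) (h : E → Matrix ι ι ℂ) (p : E) : Matrix ι ι ℂ :=
  -dirDeriv ξ (dirDeriv η h) p + dirDeriv ξ h p * (h p)⁻¹ * dirDeriv η h p

/-- The difference `∂_ξ G · G⁻¹ − ∂_ξ H · H⁻¹` of the Chern connections of `G` and `H`. -/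
def chernConnSub (ξ : E × E) (G H : E → Matrix ι ι ℂ) (p : E) : Matrix ι ι ℂ :=
  dirDeriv ξ G p * (G p)⁻¹ - dirDeriv ξ H p * (H p)⁻¹

lemma chernCurv_comp_clm {F : Type*} [NormedAddCommGroup F] [NormedSpace ℝ F] (ξ η : F × F)
    (L : F →L[ℝ] E) {q : F} (hH : ContDiffAt ℝ 2 H (L q)) :
    chernCurv ξ η (fun r => H (L r)) q = chernCurv (L ξ.1, L ξ.2) (L η.1, L η.2) H (L q) := by
  have hη : dirDeriv η (fun r => H (L r)) =ᶠ[𝓝 q] fun r => dirDeriv (L η.1, L η.2) H (L r) :=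
    (L.continuous.continuousAt.eventually (hH.eventually (by simp))).mono fun r hr =>
      dirDeriv_comp_clm η L (hr.differentiableAt two_ne_zero)
  have hHd := hH.differentiableAt two_ne_zero
  rw [chernCurv, chernCurv, dirDeriv_congr ξ hη,
    dirDeriv_comp_clm ξ L (differentiableAt_dirDeriv _ hH), dirDeriv_comp_clm ξ L hHd,
    dirDeriv_comp_clm η L hHd]

lemma differentiableAt_inv_mul_dirDeriv (η : E × E) (hG : ContDiffAt ℝ 2 G p)
    (hu : IsUnit (G p)) : DifferentiableAt ℝ (fun q => (G q)⁻¹ * dirDeriv η G q) p :=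
  (differentiableAt_matrix_inv (hG.differentiableAt two_ne_zero) hu).mul
    (differentiableAt_dirDeriv η hG)

lemma dirDeriv_inv_mul_dirDeriv (ξ η : E × E) (hG : ContDiffAt ℝ 2 G p) (hu : IsUnit (G p)) :
    dirDeriv ξ (fun q => (G q)⁻¹ * dirDeriv η G q) p = -((G p)⁻¹ * chernCurv ξ η G p) := by
  rw [dirDeriv_mul ξ (differentiableAt_matrix_inv (hG.differentiableAt two_ne_zero) hu)
      (differentiableAt_dirDeriv η hG),
    dirDeriv_inv ξ (hG.differentiableAt two_ne_zero) hu, chernCurv]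
  simp only [mul_add, mul_neg, neg_mul, mul_assoc]
  abel

lemma chernCurv_eq_neg_mul_dirDeriv (ξ η : E × E) (hG : ContDiffAt ℝ 2 G p) (hu : IsUnit (G p)) :
    chernCurv ξ η G p = -(G p * dirDeriv ξ (fun q => (G q)⁻¹ * dirDeriv η G q) p) := by
  rw [dirDeriv_inv_mul_dirDeriv ξ η hG hu, mul_neg, neg_neg,
    Matrix.mul_nonsing_inv_cancel_left _ _ ((Matrix.isUnit_iff_isUnit_det _).mp hu)]

lemma chernConnSub_conjTranspose (ξ : E × E) (hG : ∀ᶠ q in 𝓝 p, (G q).IsHermitian)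
    (hH : ∀ᶠ q in 𝓝 p, (H q).IsHermitian) :
    (chernConnSub (conjDir ξ) G H p)ᴴ =
      (G p)⁻¹ * dirDeriv ξ G p - (H p)⁻¹ * dirDeriv ξ H p := by
  have hdir {A : E → Matrix ι ι ℂ} (hA : ∀ᶠ q in 𝓝 p, (A q).IsHermitian) :
      (dirDeriv (conjDir ξ) A p)ᴴ = dirDeriv ξ A p := by
    rw [← dirDeriv_conjTranspose]
    exact dirDeriv_congr ξ (hA.mono fun q hq => hq.eq)
  simp only [chernConnSub, conjTranspose_sub, conjTranspose_mul, conjTranspose_nonsing_inv,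
    hG.self_of_nhds.eq, hH.self_of_nhds.eq, hdir hG, hdir hH]

lemma dirDeriv_inv_mul (ξ : E × E) (hG : DifferentiableAt ℝ G p) (hH : DifferentiableAt ℝ H p)
    (huG : IsUnit (G p)) (huH : IsUnit (H p)) :
    dirDeriv ξ (fun q => (G q)⁻¹ * H q) p = -((G p)⁻¹ * chernConnSub ξ G H p * H p) := by
  have hdetH := (Matrix.isUnit_iff_isUnit_det _).mp huH
  rw [dirDeriv_mul ξ (differentiableAt_matrix_inv hG huG)
    hH, dirDeriv_inv ξ hG huG]
  simp only [chernConnSub, mul_sub, sub_mul, neg_mul, mul_assoc,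
    Matrix.nonsing_inv_mul _ hdetH, mul_one]
  abel

lemma dirDeriv_trace_inv_mul (ξ : E × E) (hG : DifferentiableAt ℝ G p)
    (hH : DifferentiableAt ℝ H p) (huG : IsUnit (G p)) (huH : IsUnit (H p)) :
    dirDeriv ξ (fun q => ((G q)⁻¹ * H q).trace) p =
      ((G p)⁻¹ * H p * ((H p)⁻¹ * dirDeriv ξ H p - (G p)⁻¹ * dirDeriv ξ G p)).trace := by
  have hdetH := (Matrix.isUnit_iff_isUnit_det _).mp huH
  have hM := (differentiableAt_matrix_inv hG huG).fun_mul hH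
  have hcycle := trace_mul_comm ((G p)⁻¹ * dirDeriv ξ G p) ((G p)⁻¹ * H p)
  rw [dirDeriv_trace ξ hM, dirDeriv_inv_mul ξ hG hH huG huH]
  simp only [chernConnSub, mul_sub, sub_mul, mul_assoc, trace_neg, trace_sub,
    Matrix.nonsing_inv_mul _ hdetH, Matrix.mul_nonsing_inv_cancel_left _ _ hdetH,
    mul_one] at hcycle ⊢
  rw [hcycle, neg_sub]

/-- With `M = G⁻¹H` and `θ = G⁻¹∂_η G`, `θ' = H⁻¹∂_η H`, one has `∂_η tr M = tr (M (θ' − θ))`; a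
further derivative turns `∂M` into the connection difference and `∂θ`, `∂θ'` into curvatures. -/
lemma dirDeriv_dirDeriv_trace_inv_mul (ξ η : E × E) (hG : ContDiffAt ℝ 2 G p)
    (hH : ContDiffAt ℝ 2 H p) (huG : ∀ᶠ q in 𝓝 p, IsUnit (G q)) (huH : ∀ᶠ q in 𝓝 p, IsUnit (H q))
    (hGherm : ∀ᶠ q in 𝓝 p, (G q).IsHermitian) (hHherm : ∀ᶠ q in 𝓝 p, (H q).IsHermitian) :
    dirDeriv ξ (dirDeriv η fun q => ((G q)⁻¹ * H q).trace) p =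
      ((G p)⁻¹ * H p * (G p)⁻¹ * chernCurv ξ η G p).trace
        + ((G p)⁻¹ * chernConnSub ξ G H p * H p * (chernConnSub (conjDir η) G H p)ᴴ).trace
        - ((G p)⁻¹ * chernCurv ξ η H p).trace := by
  have huG₀ := huG.self_of_nhds
  have huH₀ := huH.self_of_nhds
  have hdetH := (Matrix.isUnit_iff_isUnit_det _).mp huH₀
  have hGd := hG.differentiableAt two_ne_zero
  have hHd := hH.differentiableAt two_ne_zero
  have hM := (differentiableAt_matrix_inv hGd huG₀).fun_mul hHd
  have hfirst : (dirDeriv η fun q => ((G q)⁻¹ * H q).trace) =ᶠ[𝓝 p] fun q =>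
      ((G q)⁻¹ * H q * ((H q)⁻¹ * dirDeriv η H q - (G q)⁻¹ * dirDeriv η G q)).trace := by
    filter_upwards [hG.eventually (by simp), hH.eventually (by simp), huG, huH]
      with q hGq hHq huGq huHq using
      dirDeriv_trace_inv_mul η (hGq.differentiableAt two_ne_zero) (hHq.differentiableAt two_ne_zero)
        huGq huHq
  have hθG := differentiableAt_inv_mul_dirDeriv η hG huG₀
  have hθH := differentiableAt_inv_mul_dirDeriv η hH huH₀
  have hθsub := hθH.fun_sub hθG
  rw [dirDeriv_congr ξ hfirst, dirDeriv_trace ξ (hM.fun_mul hθsub), dirDeriv_mul ξ hM hθsub,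
    dirDeriv_sub ξ hθH hθG, dirDeriv_inv_mul_dirDeriv ξ η hH huH₀,
    dirDeriv_inv_mul_dirDeriv ξ η hG huG₀,
    dirDeriv_inv_mul ξ hGd hHd huG₀ huH₀, chernConnSub_conjTranspose η hGherm hHherm]
  simp only [mul_assoc, neg_mul, mul_neg, mul_sub, mul_neg, trace_add, trace_sub, trace_neg,
    Matrix.mul_nonsing_inv_cancel_left _ _ hdetH]
  ring

end ChernCurvature

section GeneralizedMetric

variable {n : ℕ}

/-- The B-field transform of `T ⊕ T*` by `β`; it carries the block-diagonal metric `g ⊕ ḡ⁻¹` to the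
generalized metric. -/
def bFieldTransform (β : Matrix (Fin n) (Fin n) ℂ) : Matrix (Fin n ⊕ Fin n) (Fin n ⊕ Fin n) ℂ :=
  fromBlocks 1 β 0 1

lemma conjTranspose_bFieldTransform (β : Matrix (Fin n) (Fin n) ℂ) :
    (bFieldTransform β)ᴴ = fromBlocks 1 0 βᴴ 1 := by
  simp [bFieldTransform, fromBlocks_conjTranspose]

lemma bFieldTransform_neg_mul (β : Matrix (Fin n) (Fin n) ℂ) :
    bFieldTransform (-β) * bFieldTransform β = 1 := by
  simp [bFieldTransform, fromBlocks_multiply]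

lemma isUnit_bFieldTransform (β : Matrix (Fin n) (Fin n) ℂ) : IsUnit (bFieldTransform β) :=
  IsUnit.of_mul_eq_one_right _ (bFieldTransform_neg_mul β)

lemma inv_map_conj {g : Matrix (Fin n) (Fin n) ℂ} (hg : g.IsHermitian) :
    (g⁻¹).map (starRingEnd ℂ) = (g⁻¹)ᵀ := by
  conv_rhs => rw [← hg.inv.eq]
  rfl

lemma genMetric_eq {g : Matrix (Fin n) (Fin n) ℂ} (hg : g.IsHermitian)
    (β : Matrix (Fin n) (Fin n) ℂ) :
    genMetric g β = bFieldTransform β * fromBlocks g 0 0 (g⁻¹)ᵀ * (bFieldTransform β)ᴴ := by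
  rw [conjTranspose_bFieldTransform]
  simp [genMetric, inv_map_conj hg, bFieldTransform, fromBlocks_multiply]

lemma posDef_genMetric {g : Matrix (Fin n) (Fin n) ℂ} (hg : g.PosDef)
    (β : Matrix (Fin n) (Fin n) ℂ) : (genMetric g β).PosDef := by
  have := hg.isUnit.invertible
  have hinv := hg.inv.transpose
  have hdiag : (fromBlocks g 0 0 (g⁻¹)ᵀ).PosSemidef := by
    simpa using (hg.fromBlocks₁₁ 0 (g⁻¹)ᵀ).mpr (by simpa using hinv.posSemidef)
  rw [genMetric_eq hg.isHermitian]
  refine (isUnit_bFieldTransform β).posDef_star_right_conjugate_iff.mpr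
    (hdiag.posDef_iff_isUnit.mpr ?_)
  exact isUnit_fromBlocks_zero₂₁.mpr ⟨hg.isUnit, hinv.isUnit⟩

lemma inv_genMetric {g β : Matrix (Fin n) (Fin n) ℂ} (hg : g.PosDef) (hβ : βᵀ = -β) :
    (genMetric g β)⁻¹ = (genMetric g β)ᵀ.submatrix Sum.swap Sum.swap := by
  have hdet := (Matrix.isUnit_iff_isUnit_det g).mp hg.isUnit
  have hβ' : (βᴴ)ᵀ = -βᴴ := congrArg conjTranspose hβ |>.trans (conjTranspose_neg β)
  have htrans : gᵀ * (g⁻¹)ᵀ = 1 := by rw [← transpose_mul, nonsing_inv_mul g hdet, transpose_one]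
  refine Matrix.inv_eq_left_inv ?_
  rw [genMetric, inv_map_conj hg.isHermitian, fromBlocks_transpose,
    fromBlocks_submatrix_sum_swap_sum_swap, fromBlocks_multiply, ← fromBlocks_one]
  congr 1 <;>
    simp [hβ, hβ', mul_add, add_mul, Matrix.mul_assoc, nonsing_inv_mul g hdet, htrans,
      ← Matrix.mul_assoc gᵀ]
  abel

/-- The differential of `genMetric` at `(g, β)` in the direction `(r, s)`; the slot `s'` stands for
the variation of `βᴴ`, which is independent of `s` for complex tangent directions. -/
def genMetricVariation (g β : Matrix (Fin n) (Fin n) ℂ) :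
    Matrix (Fin n) (Fin n) ℂ × Matrix (Fin n) (Fin n) ℂ × Matrix (Fin n) (Fin n) ℂ →ₗ[ℂ]
      Matrix (Fin n ⊕ Fin n) (Fin n ⊕ Fin n) ℂ where
  toFun v := bFieldTransform β *
    fromBlocks v.1 (v.2.1 * (g⁻¹)ᵀ) ((g⁻¹)ᵀ * v.2.2) (-((g⁻¹)ᵀ * v.1ᵀ * (g⁻¹)ᵀ)) *
      (bFieldTransform β)ᴴ
  map_add' v w := by
    rw [← add_mul, ← mul_add, fromBlocks_add]
    simp [add_mul, mul_add, add_comm]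
  map_smul' c v := by
    rw [RingHom.id_apply, ← Matrix.smul_mul, ← Matrix.mul_smul, fromBlocks_smul]
    simp

lemma inv_genMetric_mul_genMetricVariation {g : Matrix (Fin n) (Fin n) ℂ} (hg : g.PosDef)
    (β r s s' : Matrix (Fin n) (Fin n) ℂ) :
    (genMetric g β)⁻¹ * genMetricVariation g β (r, s, s') =
      (bFieldTransform (-β))ᴴ * fromBlocks (g⁻¹ * r) (g⁻¹ * s * (g⁻¹)ᵀ) s' (-(g⁻¹ * r)ᵀ) *
        (bFieldTransform β)ᴴ := by
  have hdet := (Matrix.isUnit_iff_isUnit_det g).mp hg.isUnit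
  have hQ : (bFieldTransform β)ᴴ * (bFieldTransform (-β))ᴴ = 1 := by
    rw [← conjTranspose_mul, bFieldTransform_neg_mul, conjTranspose_one]
  have hblocks : fromBlocks g 0 0 (g⁻¹)ᵀ *
      fromBlocks (g⁻¹ * r) (g⁻¹ * s * (g⁻¹)ᵀ) s' (-(g⁻¹ * r)ᵀ) =
        fromBlocks r (s * (g⁻¹)ᵀ) ((g⁻¹)ᵀ * s') (-((g⁻¹)ᵀ * rᵀ * (g⁻¹)ᵀ)) := by
    simp [fromBlocks_multiply, mul_nonsing_inv_cancel_left g _ hdet, transpose_mul,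
      Matrix.mul_assoc]
  have hG := (Matrix.isUnit_iff_isUnit_det _).mp (posDef_genMetric hg β).isUnit
  rw [← Matrix.nonsing_inv_mul_cancel_left (genMetric g β)
    ((bFieldTransform (-β))ᴴ * _ * (bFieldTransform β)ᴴ) hG]
  congr 1
  rw [genMetric_eq hg.isHermitian]
  change bFieldTransform β * _ * _ = _
  rw [← hblocks]
  simp only [Matrix.mul_assoc]
  rw [← Matrix.mul_assoc (bFieldTransform β)ᴴ (bFieldTransform (-β))ᴴ, hQ, Matrix.one_mul]

end GeneralizedMetric

section GeneralizedMetricField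

open scoped Matrix.Norms.L2Operator

variable {E : Type*} [NormedAddCommGroup E] [NormedSpace ℝ E] {n : ℕ}
  {g β : E → Matrix (Fin n) (Fin n) ℂ} {p : E}

lemma contDiffAt_bFieldTransform {m : WithTop ℕ∞} (hβ : ContDiffAt ℝ m β p) :
    ContDiffAt ℝ m (fun q => bFieldTransform (β q)) p :=
  contDiffAt_fromBlocks contDiffAt_const hβ contDiffAt_const contDiffAt_const

lemma dirDeriv_bFieldTransform (ξ : E × E) (hβ : DifferentiableAt ℝ β p) :
    dirDeriv ξ (fun q => bFieldTransform (β q)) p = fromBlocks 0 (dirDeriv ξ β p) 0 0 := by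
  simp only [bFieldTransform, dirDeriv_fromBlocks ξ (differentiableAt_const 1) hβ
    (differentiableAt_const 0) (differentiableAt_const 1), dirDeriv_const]

lemma dirDeriv_conjTranspose_bFieldTransform (ξ : E × E) (hβ : DifferentiableAt ℝ β p) :
    dirDeriv ξ (fun q => (bFieldTransform (β q))ᴴ) p =
      fromBlocks 0 0 (dirDeriv (conjDir ξ) β p)ᴴ 0 := by
  simp [dirDeriv_conjTranspose, dirDeriv_bFieldTransform _ hβ, fromBlocks_conjTranspose]

lemma differentiableAt_bFieldTransform (hβ : DifferentiableAt ℝ β p) :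
    DifferentiableAt ℝ (fun q => bFieldTransform (β q)) p :=
  differentiableAt_fromBlocks (differentiableAt_const 1) hβ (differentiableAt_const 0)
    (differentiableAt_const 1)

lemma dirDeriv_inv_transpose (ξ : E × E) (hg : DifferentiableAt ℝ g p) (hu : IsUnit (g p)) :
    dirDeriv ξ (fun q => ((g q)⁻¹)ᵀ) p =
      -(((g p)⁻¹)ᵀ * (dirDeriv ξ g p)ᵀ * ((g p)⁻¹)ᵀ) := by
  rw [dirDeriv_transpose ξ (differentiableAt_matrix_inv hg hu), dirDeriv_inv ξ hg hu]
  simp [Matrix.mul_assoc]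

lemma contDiffAt_genMetric {m : WithTop ℕ∞} (hg : ContDiffAt ℝ m g p) (hβ : ContDiffAt ℝ m β p)
    (hgpos : ∀ᶠ q in 𝓝 p, (g q).PosDef) :
    ContDiffAt ℝ m (fun q => genMetric (g q) (β q)) p := by
  have hP := contDiffAt_bFieldTransform hβ
  have hD : ContDiffAt ℝ m (fun q => fromBlocks (g q) 0 0 ((g q)⁻¹)ᵀ) p :=
    contDiffAt_fromBlocks hg contDiffAt_const contDiffAt_const
      (contDiffAt_transpose (contDiffAt_matrix_inv hg hgpos.self_of_nhds.isUnit))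
  exact ((hP.mul hD).mul (contDiffAt_conjTranspose hP)).congr_of_eventuallyEq
    (hgpos.mono fun q hq => genMetric_eq hq.isHermitian (β q))

lemma dirDeriv_genMetric (ξ : E × E) (hg : DifferentiableAt ℝ g p) (hβ : DifferentiableAt ℝ β p)
    (hgpos : ∀ᶠ q in 𝓝 p, (g q).PosDef) :
    dirDeriv ξ (fun q => genMetric (g q) (β q)) p =
      genMetricVariation (g p) (β p)
        (dirDeriv ξ g p, dirDeriv ξ β p, (dirDeriv (conjDir ξ) β p)ᴴ) := by
  have hu := hgpos.self_of_nhds.isUnit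
  have hP := differentiableAt_bFieldTransform hβ
  have hgi := differentiableAt_transpose (differentiableAt_matrix_inv hg hu)
  have hD :=
    differentiableAt_fromBlocks hg (differentiableAt_const 0) (differentiableAt_const 0) hgi
  have hG : (fun q => genMetric (g q) (β q)) =ᶠ[𝓝 p] fun q =>
      bFieldTransform (β q) * fromBlocks (g q) 0 0 ((g q)⁻¹)ᵀ * (bFieldTransform (β q))ᴴ :=
    hgpos.mono fun q hq => genMetric_eq hq.isHermitian (β q)
  rw [dirDeriv_congr ξ hG, dirDeriv_mul ξ (hP.fun_mul hD) (differentiableAt_conjTranspose hP),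
    dirDeriv_mul ξ hP hD,
    dirDeriv_fromBlocks ξ hg (differentiableAt_const 0) (differentiableAt_const 0) hgi,
    dirDeriv_inv_transpose ξ hg hu, dirDeriv_bFieldTransform ξ hβ,
    dirDeriv_conjTranspose_bFieldTransform ξ hβ]
  change _ = bFieldTransform _ * _ * _
  rw [conjTranspose_bFieldTransform]
  simp only [bFieldTransform, fromBlocks_multiply, fromBlocks_add]
  congr 1 <;> simp [add_mul, Matrix.mul_assoc] <;> abel

/-- The Chern curvature of `g` minus the quadratic term `∂_ηβ · ḡ⁻¹ · (∂_ξ̄ β)*`; it is the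
`g`-block of the curvature of the generalized metric, and its `g`-trace is `S^g − T²` when `β` is a
torsion potential. -/
def twistedCurv (ξ η : E × E) (g β : E → Matrix (Fin n) (Fin n) ℂ) (p : E) :
    Matrix (Fin n) (Fin n) ℂ :=
  chernCurv ξ η g p -
    dirDeriv η β p * ((g p)⁻¹)ᵀ * (dirDeriv (conjDir ξ) β p)ᴴ

/-- The Chern covariant second derivative `∇_ξ∇_ηβ` of a two-form `β` for `η` of type `(0,1)`. -/
def nablaSq (ξ η : E × E) (g β : E → Matrix (Fin n) (Fin n) ℂ) (p : E) :
    Matrix (Fin n) (Fin n) ℂ :=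
  dirDeriv ξ (dirDeriv η β) p - dirDeriv ξ g p * (g p)⁻¹ * dirDeriv η β p -
    dirDeriv η β p * ((g p)⁻¹)ᵀ * (dirDeriv ξ g p)ᵀ

lemma dirDeriv_inv_mul_mul_inv_transpose (ξ η : E × E) (hg : DifferentiableAt ℝ g p)
    (hβ : ContDiffAt ℝ 2 β p) (hu : IsUnit (g p)) :
    dirDeriv ξ (fun q => (g q)⁻¹ * dirDeriv η β q * ((g q)⁻¹)ᵀ) p =
      (g p)⁻¹ * nablaSq ξ η g β p * ((g p)⁻¹)ᵀ := by
  have hgi := differentiableAt_matrix_inv hg hu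
  have hdβ := differentiableAt_dirDeriv η hβ
  rw [dirDeriv_mul ξ (hgi.fun_mul hdβ) (differentiableAt_transpose hgi), dirDeriv_mul ξ hgi hdβ,
    dirDeriv_inv_transpose ξ hg hu, dirDeriv_inv ξ hg hu, nablaSq]
  simp only [mul_sub, sub_mul, add_mul, mul_neg, neg_mul, Matrix.mul_assoc]
  abel

/-- The directions `ξ`, `η` trade places because derivatives of `β` commute. -/
lemma conjTranspose_nablaSq (ξ η : E × E) (hβ : ContDiffAt ℝ 2 β p)
    (hg : ∀ᶠ q in 𝓝 p, (g q).IsHermitian) :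
    (nablaSq (conjDir η) (conjDir ξ) g β p)ᴴ =
      dirDeriv ξ (fun q => (dirDeriv (conjDir η) β q)ᴴ) p -
        ((g p)⁻¹ * dirDeriv η g p)ᵀ * (dirDeriv (conjDir ξ) β p)ᴴ -
        (dirDeriv (conjDir ξ) β p)ᴴ * ((g p)⁻¹ * dirDeriv η g p) := by
  have hdg : (dirDeriv (conjDir η) g p)ᴴ = dirDeriv η g p := by
    rw [← dirDeriv_conjTranspose]
    exact dirDeriv_congr η (hg.mono fun q hq => hq.eq)
  have hinv : ((g p)⁻¹)ᴴ = (g p)⁻¹ := hg.self_of_nhds.inv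
  have hcomm (A : Matrix (Fin n) (Fin n) ℂ) : (Aᵀ)ᴴ = (Aᴴ)ᵀ := rfl
  rw [nablaSq, dirDeriv_conjTranspose, dirDeriv_comm (conjDir ξ) (conjDir η) hβ]
  simp only [conjTranspose_sub, conjTranspose_mul, transpose_mul, hcomm, hdg, hinv,
    Matrix.mul_assoc]
  abel

/-- The connection matrix `G⁻¹∂_ηG` of the generalized metric in the frame given by the B-field
transform. -/
def bFieldConn (η : E × E) (g β : E → Matrix (Fin n) (Fin n) ℂ) (p : E) :
    Matrix (Fin n ⊕ Fin n) (Fin n ⊕ Fin n) ℂ :=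
  fromBlocks ((g p)⁻¹ * dirDeriv η g p) ((g p)⁻¹ * dirDeriv η β p * ((g p)⁻¹)ᵀ)
    (dirDeriv (conjDir η) β p)ᴴ (-((g p)⁻¹ * dirDeriv η g p)ᵀ)

lemma inv_genMetric_mul_dirDeriv_genMetric (η : E × E) (hg : DifferentiableAt ℝ g p)
    (hβ : DifferentiableAt ℝ β p) (hgpos : ∀ᶠ q in 𝓝 p, (g q).PosDef) :
    (genMetric (g p) (β p))⁻¹ * dirDeriv η (fun q => genMetric (g q) (β q)) p =
      (bFieldTransform (-β p))ᴴ * bFieldConn η g β p * (bFieldTransform (β p))ᴴ := by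
  rw [dirDeriv_genMetric η hg hβ hgpos, inv_genMetric_mul_genMetricVariation hgpos.self_of_nhds,
    bFieldConn]

lemma differentiableAt_bFieldConn (η : E × E) (hg : ContDiffAt ℝ 2 g p) (hβ : ContDiffAt ℝ 2 β p)
    (hu : IsUnit (g p)) : DifferentiableAt ℝ (bFieldConn η g β) p := by
  have hgi := differentiableAt_matrix_inv (hg.differentiableAt two_ne_zero) hu
  have hθ := differentiableAt_inv_mul_dirDeriv η hg hu
  have hdβ (ζ : E × E) := differentiableAt_dirDeriv ζ hβ
  exact differentiableAt_fromBlocks hθ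
    ((hgi.fun_mul (hdβ η)).fun_mul (differentiableAt_transpose hgi))
    (differentiableAt_conjTranspose (hdβ _)) (differentiableAt_transpose hθ).fun_neg

lemma dirDeriv_bFieldConn (ξ η : E × E) (hg : ContDiffAt ℝ 2 g p) (hβ : ContDiffAt ℝ 2 β p)
    (hu : IsUnit (g p)) :
    dirDeriv ξ (bFieldConn η g β) p =
      fromBlocks (-((g p)⁻¹ * chernCurv ξ η g p)) ((g p)⁻¹ * nablaSq ξ η g β p * ((g p)⁻¹)ᵀ)
        (dirDeriv ξ (fun q => (dirDeriv (conjDir η) β q)ᴴ) p)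
        ((g p)⁻¹ * chernCurv ξ η g p)ᵀ := by
  have hgd := hg.differentiableAt two_ne_zero
  have hgi := differentiableAt_matrix_inv hgd hu
  have hθ := differentiableAt_inv_mul_dirDeriv η hg hu
  have hdβ (ζ : E × E) := differentiableAt_dirDeriv ζ hβ
  unfold bFieldConn
  rw [dirDeriv_fromBlocks ξ hθ ((hgi.fun_mul (hdβ η)).fun_mul (differentiableAt_transpose hgi))
      (differentiableAt_conjTranspose (hdβ _)) (differentiableAt_transpose hθ).fun_neg,
    dirDeriv_neg, dirDeriv_transpose ξ hθ, dirDeriv_inv_mul_dirDeriv ξ η hg hu,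
    dirDeriv_inv_mul_mul_inv_transpose ξ η hgd hβ hu, transpose_neg, neg_neg]

/-- Differentiating the frame `Q = (bFieldTransform β)ᴴ` in `G⁻¹∂_ηG = Q⁻¹XQ` contributes a
commutator with `c = ∂_ξQ`. -/
lemma chernCurv_genMetric_eq_commutator (ξ η : E × E) (hg : ContDiffAt ℝ 2 g p)
    (hβ : ContDiffAt ℝ 2 β p) (hgpos : ∀ᶠ q in 𝓝 p, (g q).PosDef) :
    let c := fromBlocks 0 0 (dirDeriv (conjDir ξ) β p)ᴴ 0
    chernCurv ξ η (fun q => genMetric (g q) (β q)) p =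
      -(bFieldTransform (β p) * (fromBlocks (g p) 0 0 ((g p)⁻¹)ᵀ *
        (dirDeriv ξ (bFieldConn η g β) p + bFieldConn η g β p * c - c * bFieldConn η g β p)) *
          (bFieldTransform (β p))ᴴ) := by
  intro c
  have hβd := hβ.differentiableAt two_ne_zero
  have hX := differentiableAt_bFieldConn η hg hβ hgpos.self_of_nhds.isUnit
  have hQ := differentiableAt_conjTranspose (differentiableAt_bFieldTransform hβd)
  have hQ' := differentiableAt_conjTranspose (differentiableAt_bFieldTransform hβd.fun_neg)
  have hconn : (fun q => (genMetric (g q) (β q))⁻¹ *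
      dirDeriv η (fun r => genMetric (g r) (β r)) q) =ᶠ[𝓝 p] fun q =>
        (bFieldTransform (-β q))ᴴ * bFieldConn η g β q * (bFieldTransform (β q))ᴴ := by
    filter_upwards [hg.eventually (by simp), hβ.eventually (by simp), hgpos.eventually_nhds]
      with q hgq hβq hgposq using inv_genMetric_mul_dirDeriv_genMetric η
        (hgq.differentiableAt two_ne_zero) (hβq.differentiableAt two_ne_zero) hgposq
  have hQQ' : (bFieldTransform (β p))ᴴ * (bFieldTransform (-β p))ᴴ = 1 := by
    rw [← conjTranspose_mul, bFieldTransform_neg_mul, conjTranspose_one]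
  have hQc : (bFieldTransform (β p))ᴴ * c = c := by
    simp [conjTranspose_bFieldTransform, c, fromBlocks_multiply]
  have hcQ : c * (bFieldTransform (β p))ᴴ = c := by
    simp [conjTranspose_bFieldTransform, c, fromBlocks_multiply]
  have hc' : fromBlocks 0 0 (dirDeriv (conjDir ξ) (fun q => -β q) p)ᴴ 0 = -c := by
    simp [dirDeriv_neg, c, fromBlocks_neg]
  rw [chernCurv_eq_neg_mul_dirDeriv ξ η (contDiffAt_genMetric hg hβ hgpos)
      (posDef_genMetric hgpos.self_of_nhds _).isUnit, dirDeriv_congr ξ hconn,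
    dirDeriv_mul ξ (hQ'.fun_mul hX) hQ, dirDeriv_mul ξ hQ' hX,
    dirDeriv_conjTranspose_bFieldTransform ξ hβd,
    dirDeriv_conjTranspose_bFieldTransform ξ hβd.fun_neg, hc',
    genMetric_eq hgpos.self_of_nhds.isHermitian]
  simp only [c, add_mul, sub_mul, mul_add, mul_sub, mul_assoc, neg_mul, mul_neg] at hQc hcQ ⊢
  simp only [hcQ, ← mul_assoc (bFieldTransform (β p))ᴴ, hQc, hQQ', one_mul]
  abel

lemma chernCurv_genMetric (ξ η : E × E) (hg : ContDiffAt ℝ 2 g p) (hβ : ContDiffAt ℝ 2 β p)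
    (hgpos : ∀ᶠ q in 𝓝 p, (g q).PosDef) (hβanti : ∀ᶠ q in 𝓝 p, (β q)ᵀ = -β q) :
    chernCurv ξ η (fun q => genMetric (g q) (β q)) p =
      -genMetricVariation (g p) (β p) (-twistedCurv ξ η g β p, nablaSq ξ η g β p,
        (nablaSq (conjDir η) (conjDir ξ) g β p)ᴴ) := by
  have hu := hgpos.self_of_nhds.isUnit
  have hdet := (Matrix.isUnit_iff_isUnit_det _).mp hu
  have hanti (ζ : E × E) : (dirDeriv ζ β p)ᵀ = -dirDeriv ζ β p := by
    rw [← dirDeriv_transpose ζ (hβ.differentiableAt two_ne_zero), dirDeriv_congr ζ hβanti,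
      dirDeriv_neg]
  have hanti' (ζ : E × E) : (dirDeriv ζ β p)ᴴᵀ = -(dirDeriv ζ β p)ᴴ :=
    (congrArg conjTranspose (hanti ζ)).trans (conjTranspose_neg _)
  rw [chernCurv_genMetric_eq_commutator ξ η hg hβ hgpos, dirDeriv_bFieldConn ξ η hg hβ hu,
    conjTranspose_nablaSq ξ η hβ (hgpos.mono fun q hq => hq.isHermitian)]
  change _ = -(bFieldTransform _ * _ * _)
  congr 3
  simp only [bFieldConn, twistedCurv, fromBlocks_multiply, fromBlocks_add, fromBlocks_neg,
    sub_eq_add_neg]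
  congr 1 <;>
    simp [mul_add, add_mul, Matrix.mul_assoc, hanti, hanti', mul_nonsing_inv_cancel_left _ _ hdet]
  abel

end GeneralizedMetricField

section MetricTrace

variable {n : ℕ} {V W : Type*} [AddCommGroup V] [Module ℂ V] [AddCommGroup W] [Module ℂ W]

/-- The trace `Σ g^{j̄i} T_{ij̄}` of a family `T` with respect to the Hermitian matrix `g`. -/
def metricTrace (g : Matrix (Fin n) (Fin n) ℂ) (T : Fin n → Fin n → V) : V :=
  ∑ i, ∑ j, g⁻¹ j i • T i j

lemma map_metricTrace (L : V →ₗ[ℂ] W) (g : Matrix (Fin n) (Fin n) ℂ) (T : Fin n → Fin n → V) :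
    L (metricTrace g T) = metricTrace g fun i j => L (T i j) := by
  simp [metricTrace]

lemma metricTrace_neg (g : Matrix (Fin n) (Fin n) ℂ) (T : Fin n → Fin n → V) :
    metricTrace g (fun i j => -T i j) = -metricTrace g T := by
  simp [metricTrace]

lemma metricTrace_add (g : Matrix (Fin n) (Fin n) ℂ) (S T : Fin n → Fin n → V) :
    metricTrace g (fun i j => S i j + T i j) = metricTrace g S + metricTrace g T := by
  simp [metricTrace, Finset.sum_add_distrib]

lemma metricTrace_sub (g : Matrix (Fin n) (Fin n) ℂ) (S T : Fin n → Fin n → V) :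
    metricTrace g (fun i j => S i j - T i j) = metricTrace g S - metricTrace g T := by
  simp [metricTrace, smul_sub, Finset.sum_sub_distrib]

lemma metricTrace_prodMk (g : Matrix (Fin n) (Fin n) ℂ) (S : Fin n → Fin n → V)
    (T : Fin n → Fin n → W) :
    metricTrace g (fun i j => (S i j, T i j)) = (metricTrace g S, metricTrace g T) := by
  simp [metricTrace, Prod.ext_iff, Prod.fst_sum, Prod.snd_sum]

lemma metricTrace_apply_apply {ι κ : Type*} (g : Matrix (Fin n) (Fin n) ℂ)
    (T : Fin n → Fin n → Matrix ι κ ℂ) (a : ι) (b : κ) :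
    metricTrace g T a b = metricTrace g fun i j => T i j a b :=
  map_metricTrace (Matrix.entryLinearMap ℂ ℂ a b) g T

lemma conjTranspose_metricTrace {ι κ : Type*} {g : Matrix (Fin n) (Fin n) ℂ} (hg : g.IsHermitian)
    (T : Fin n → Fin n → Matrix ι κ ℂ) :
    (metricTrace g T)ᴴ = metricTrace g fun i j => (T j i)ᴴ := by
  simp only [metricTrace, conjTranspose_sum, conjTranspose_smul, hg.inv.apply]
  exact Finset.sum_comm

end MetricTrace

section Wirtinger

variable {n : ℕ}

/-- The coordinate vector `∂ᵢ = ½(∂/∂xᵢ − i·∂/∂yᵢ)` of type `(1,0)`, as a complex tangent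
vector. -/
def holDir (i : Fin n) : (Fin n → ℂ) × (Fin n → ℂ) :=
  ((2⁻¹ : ℝ) • Pi.single i 1, -((2⁻¹ : ℝ) • Pi.single i Complex.I))

/-- The coordinate vector `∂ᵢ` on space-time `ℝ × ℂⁿ`. -/
def holDirP (i : Fin n) : (ℝ × (Fin n → ℂ)) × (ℝ × (Fin n → ℂ)) :=
  ((0, (holDir i).1), (0, (holDir i).2))

/-- The time direction `∂ₜ` on space-time `ℝ × ℂⁿ`, a real tangent vector. -/
def timeDir (n : ℕ) : (ℝ × (Fin n → ℂ)) × (ℝ × (Fin n → ℂ)) := ((1, 0), 0)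

lemma conjDir_timeDir : conjDir (timeDir n) = timeDir n := by simp [conjDir, timeDir]

lemma wd_eq_dirDeriv (i : Fin n) (f : (Fin n → ℂ) → ℂ) : wd i f = dirDeriv (holDir i) f := by
  ext z
  simp only [wd, dirDeriv, holDir, map_neg, map_smul, Complex.real_smul, smul_eq_mul]
  push_cast
  ring

lemma wdb_eq_dirDeriv (i : Fin n) (f : (Fin n → ℂ) → ℂ) :
    wdb i f = dirDeriv (conjDir (holDir i)) f := by
  ext z
  simp only [wdb, dirDeriv, conjDir, holDir, neg_neg, map_smul, Complex.real_smul, smul_eq_mul]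
  push_cast
  ring

lemma wdP_eq_dirDeriv (i : Fin n) (f : ℝ × (Fin n → ℂ) → ℂ) :
    wdP i f = dirDeriv (holDirP i) f := by
  ext p
  have hsmul (v : Fin n → ℂ) : ((0 : ℝ), (2⁻¹ : ℝ) • v) = (2⁻¹ : ℝ) • (0, v) := by simp
  have hneg (v : Fin n → ℂ) : ((0 : ℝ), -v) = -(0, v) := by simp
  simp only [wdP, dirDeriv, holDirP, holDir, hneg, hsmul, map_neg, map_smul, Complex.real_smul,
    smul_eq_mul]
  push_cast
  ring

lemma wdbP_eq_dirDeriv (i : Fin n) (f : ℝ × (Fin n → ℂ) → ℂ) :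
    wdbP i f = dirDeriv (conjDir (holDirP i)) f := by
  ext p
  have hsmul (v : Fin n → ℂ) : ((0 : ℝ), (2⁻¹ : ℝ) • v) = (2⁻¹ : ℝ) • (0, v) := by simp
  have hneg (v : Fin n → ℂ) : ((0 : ℝ), -v) = -(0, v) := by simp
  simp only [wdbP, dirDeriv, conjDir, holDirP, holDir, hneg, neg_neg, hsmul, map_smul,
    Complex.real_smul, smul_eq_mul]
  push_cast
  ring

lemma dtP_eq_dirDeriv (f : ℝ × (Fin n → ℂ) → ℂ) (p : ℝ × (Fin n → ℂ)) :
    dtP f p = dirDeriv (timeDir n) f p := by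
  simp [dtP, dirDeriv, timeDir]

lemma lapP_eq_metricTrace (g : ℝ × (Fin n → ℂ) → Matrix (Fin n) (Fin n) ℂ)
    (f : ℝ × (Fin n → ℂ) → ℂ) (p : ℝ × (Fin n → ℂ)) :
    lapP g f p = metricTrace (g p) fun i j =>
      dirDeriv (holDirP i) (dirDeriv (conjDir (holDirP j)) f) p := by
  simp only [lapP, wdP_eq_dirDeriv, wdbP_eq_dirDeriv]
  rfl

end Wirtinger

lemma trace_mul_mul_mul_conjTranspose {ι : Type*} [Fintype ι] (W Y H Z : Matrix ι ι ℂ) :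
    (W * Y * H * Zᴴ).trace =
      ∑ A, ∑ B, ∑ D, ∑ E, W B A * H D E * Y A D * (starRingEnd ℂ) (Z B E) := by
  rw [mul_assoc, mul_assoc, trace, Finset.sum_comm]
  refine Finset.sum_congr rfl fun B _ => ?_
  simp only [diag_apply, mul_apply, Finset.mul_sum, conjTranspose_apply, starRingEnd_apply]
  exact Finset.sum_congr rfl fun A _ => Finset.sum_congr rfl fun D _ =>
    Finset.sum_congr rfl fun E _ => by ring

section PluriclosedFlow

open scoped Matrix.Norms.L2Operator

variable {n : ℕ} {ι : Type*} [Fintype ι] [DecidableEq ι] {p : ℝ × (Fin n → ℂ)}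

lemma chernP_eq_chernCurv {h : ℝ × (Fin n → ℂ) → Matrix ι ι ℂ} (hh : ContDiffAt ℝ 2 h p)
    (i j : Fin n) (a b : ι) :
    chernP h i j a b p = chernCurv (holDirP i) (conjDir (holDirP j)) h p a b := by
  have hd := hh.differentiableAt two_ne_zero
  simp only [chernP, chernCurv, wdP_eq_dirDeriv, wdbP_eq_dirDeriv, Matrix.add_apply,
    Matrix.neg_apply, Matrix.mul_apply, Finset.sum_mul, dirDeriv_apply_apply _ hd,
    dirDeriv_dirDeriv_apply_apply _ _ hh]
  congr 1
  exact Finset.sum_comm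

lemma UpsP_eq_chernConnSub {G H : ℝ × (Fin n → ℂ) → Matrix ι ι ℂ} (hG : DifferentiableAt ℝ G p)
    (hH : DifferentiableAt ℝ H p) (i : Fin n) (A D : ι) :
    UpsP G H i A D p = chernConnSub (holDirP i) G H p A D := by
  simp only [UpsP, chernConnSub, wdP_eq_dirDeriv, Matrix.sub_apply, Matrix.mul_apply,
    Finset.sum_sub_distrib, dirDeriv_apply_apply _ hG, dirDeriv_apply_apply _ hH]

lemma upsNormP_eq_metricTrace {G H : ℝ × (Fin n → ℂ) → Matrix ι ι ℂ}
    (g : ℝ × (Fin n → ℂ) → Matrix (Fin n) (Fin n) ℂ) (K : ℝ × (Fin n → ℂ) → Matrix ι ι ℂ)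
    (hG : DifferentiableAt ℝ G p) (hH : DifferentiableAt ℝ H p) :
    upsNormP g G H K p = metricTrace (g p) fun i j =>
      ((G p)⁻¹ * chernConnSub (holDirP i) G H p * K p *
        (chernConnSub (holDirP j) G H p)ᴴ).trace := by
  simp only [upsNormP, metricTrace, trace_mul_mul_mul_conjTranspose, UpsP_eq_chernConnSub hG hH,
    smul_eq_mul, Finset.mul_sum]
  simp only [mul_assoc]

variable {g β : ℝ × (Fin n → ℂ) → Matrix (Fin n) (Fin n) ℂ}

lemma dirDeriv_timeDir_metric (hg : ContDiffAt ℝ 2 g p) (hβ : DifferentiableAt ℝ β p)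
    (htorsion : ∀ i j k, wdbP k (fun q => β q i j) p = torsionP g i j k p)
    (hflow : ∀ i j, dtP (fun q => g q i j) p = -traceChernP g g i j p + torsionSqP g i j p) :
    dirDeriv (timeDir n) g p = -metricTrace (g p) fun i j =>
      twistedCurv (holDirP i) (conjDir (holDirP j)) g β p := by
  ext a b
  have hT : torsionSqP g a b p = metricTrace (g p) fun i j =>
      (dirDeriv (conjDir (holDirP j)) β p * ((g p)⁻¹)ᵀ *
        (dirDeriv (conjDir (holDirP i)) β p)ᴴ) a b := by
    simp only [torsionSqP, ← htorsion, wdbP_eq_dirDeriv, metricTrace, smul_eq_mul, mul_apply,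
      Finset.mul_sum, Finset.sum_mul, transpose_apply, conjTranspose_apply, starRingEnd_apply,
      dirDeriv_apply_apply _ hβ]
    rw [Finset.sum_comm_cycle]
    refine Finset.sum_congr rfl fun i _ => ?_
    rw [Finset.sum_comm_cycle]
    exact Finset.sum_congr rfl fun j _ => Finset.sum_congr rfl fun k _ =>
      Finset.sum_congr rfl fun l _ => by ring
  rw [dirDeriv_apply_apply _ (hg.differentiableAt two_ne_zero), ← dtP_eq_dirDeriv, hflow, hT,
    Matrix.neg_apply, metricTrace_apply_apply]
  simp only [twistedCurv, Matrix.sub_apply, metricTrace_sub, ← chernP_eq_chernCurv hg]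
  rw [neg_sub', sub_neg_eq_add]
  rfl

lemma dirDeriv_timeDir_potential (hg : DifferentiableAt ℝ g p) (hβ : ContDiffAt ℝ 2 β p)
    (hflow : ∀ i j, dtP (fun q => β q i j) p = lapBetaP g β i j p) :
    dirDeriv (timeDir n) β p = metricTrace (g p) fun i j =>
      nablaSq (holDirP i) (conjDir (holDirP j)) g β p := by
  ext a b
  have hβd := hβ.differentiableAt two_ne_zero
  have hnabla (i j : Fin n) : nabla2betaP g β i j a b p =
      nablaSq (holDirP i) (conjDir (holDirP j)) g β p a b := by
    simp only [nabla2betaP, nablaSq, wdP_eq_dirDeriv, wdbP_eq_dirDeriv, Matrix.sub_apply, mul_apply,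
      Finset.sum_mul, transpose_apply, dirDeriv_dirDeriv_apply_apply _ _ hβ,
      dirDeriv_apply_apply _ hβd, dirDeriv_apply_apply _ hg]
    congr 1
    · congr 1
      rw [Finset.sum_comm]
      exact Finset.sum_congr rfl fun l _ => Finset.sum_congr rfl fun k _ => by ring
    · exact Finset.sum_congr rfl fun k _ => Finset.sum_congr rfl fun l _ => by ring
  rw [dirDeriv_apply_apply _ hβd, ← dtP_eq_dirDeriv, hflow, metricTrace_apply_apply]
  simp only [lapBetaP, hnabla]
  rfl

/-- In terms of the generalized metric, pluriclosed flow is the flow by the `g`-trace of the Chern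
curvature. -/
lemma dirDeriv_timeDir_genMetric (hg : ContDiffAt ℝ 2 g p) (hβ : ContDiffAt ℝ 2 β p)
    (hgpos : ∀ᶠ q in 𝓝 p, (g q).PosDef) (hβanti : ∀ᶠ q in 𝓝 p, (β q)ᵀ = -β q)
    (htorsion : ∀ i j k, wdbP k (fun q => β q i j) p = torsionP g i j k p)
    (hflowg : ∀ i j, dtP (fun q => g q i j) p = -traceChernP g g i j p + torsionSqP g i j p)
    (hflowβ : ∀ i j, dtP (fun q => β q i j) p = lapBetaP g β i j p) :
    dirDeriv (timeDir n) (fun q => genMetric (g q) (β q)) p = -metricTrace (g p) fun i j =>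
      chernCurv (holDirP i) (conjDir (holDirP j)) (fun q => genMetric (g q) (β q)) p := by
  have hgd := hg.differentiableAt two_ne_zero
  have hβd := hβ.differentiableAt two_ne_zero
  have hherm := hgpos.self_of_nhds.isHermitian
  rw [dirDeriv_genMetric (timeDir n) hgd hβd hgpos, conjDir_timeDir,
    dirDeriv_timeDir_metric hg hβd htorsion hflowg, dirDeriv_timeDir_potential hgd hβ hflowβ,
    conjTranspose_metricTrace hherm, ← metricTrace_neg, ← metricTrace_prodMk, ← metricTrace_prodMk,
    map_metricTrace, ← metricTrace_neg]
  simp only [chernCurv_genMetric _ _ hg hβ hgpos hβanti, neg_neg, conjDir_conjDir]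

/-- The curvature of `G` cancels against the evolution of `G`. -/
lemma heat_trace_inv_mul {G H : ℝ × (Fin n → ℂ) → Matrix ι ι ℂ} (hG : ContDiffAt ℝ 2 G p)
    (hH : ContDiffAt ℝ 2 H p) (hGpos : ∀ᶠ q in 𝓝 p, (G q).PosDef)
    (hHpos : ∀ᶠ q in 𝓝 p, (H q).PosDef)
    (hflow : dirDeriv (timeDir n) G p = -metricTrace (g p) fun i j =>
      chernCurv (holDirP i) (conjDir (holDirP j)) G p)
    (hstatic : dirDeriv (timeDir n) H p = 0) :
    dtP (fun q => ((G q)⁻¹ * H q).trace) p - lapP g (fun q => ((G q)⁻¹ * H q).trace) p =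
      -upsNormP g G H H p + metricTrace (g p) fun i j =>
        ((G p)⁻¹ * chernCurv (holDirP i) (conjDir (holDirP j)) H p).trace := by
  have hGd := hG.differentiableAt two_ne_zero
  have hHd := hH.differentiableAt two_ne_zero
  have huG := hGpos.mono fun _ hq => hq.isUnit
  have huH := hHpos.mono fun _ hq => hq.isUnit
  have htrace := map_metricTrace
    (traceLinearMap ι ℂ ℂ ∘ₗ LinearMap.mulLeft ℂ ((G p)⁻¹ * H p * (G p)⁻¹)) (g p)
      fun i j => chernCurv (holDirP i) (conjDir (holDirP j)) G p
  simp only [LinearMap.comp_apply, traceLinearMap_apply, LinearMap.mulLeft_apply] at htrace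
  rw [dtP_eq_dirDeriv, dirDeriv_trace_inv_mul _ hGd hHd huG.self_of_nhds huH.self_of_nhds, hstatic,
    hflow, mul_zero, zero_sub, mul_neg, mul_neg, mul_neg,
    neg_neg, ← mul_assoc, htrace, lapP_eq_metricTrace,
    upsNormP_eq_metricTrace g H hGd hHd]
  simp only [dirDeriv_dirDeriv_trace_inv_mul _ _ hG hH huG huH
    (hGpos.mono fun _ hq => hq.isHermitian) (hHpos.mono fun _ hq => hq.isHermitian),
    conjDir_conjDir, metricTrace_add, metricTrace_sub]
  ring

end PluriclosedFlow

section Positivity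

open scoped MatrixOrder Matrix.Norms.L2Operator

variable {ι κ : Type*} [Fintype ι]

lemma exists_eq_conjTranspose_mul_self {A : Matrix ι ι ℂ} (hA : A.PosSemidef) :
    ∃ S : Matrix ι ι ℂ, A = Sᴴ * S := by
  classical exact CStarAlgebra.nonneg_iff_eq_star_mul_self.mp hA.nonneg

lemma trace_mul_nonneg {A B : Matrix ι ι ℂ} (hA : A.PosSemidef) (hB : B.PosSemidef) :
    0 ≤ (A * B).trace := by
  obtain ⟨S, rfl⟩ := exists_eq_conjTranspose_mul_self hA
  rw [mul_assoc, trace_mul_comm]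
  exact (hB.mul_mul_conjTranspose_same S).trace_nonneg

lemma posSemidef_gram_trace [Finite κ] {W K : Matrix ι ι ℂ} (hW : W.PosSemidef)
    (hK : K.PosSemidef) (Y : κ → Matrix ι ι ℂ) :
    (Matrix.of fun i j => (W * Y i * K * (Y j)ᴴ).trace).PosSemidef := by
  obtain ⟨S, rfl⟩ := exists_eq_conjTranspose_mul_self hW
  obtain ⟨R, rfl⟩ := exists_eq_conjTranspose_mul_self hK
  let Z : Matrix κ (ι × ι) ℂ := Matrix.of fun i ab => (S * Y i * Rᴴ) ab.1 ab.2
  have hZ (i j : κ) : (Sᴴ * S * Y i * (Rᴴ * R) * (Y j)ᴴ).trace = (Z * Zᴴ) i j :=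
    calc (Sᴴ * S * Y i * (Rᴴ * R) * (Y j)ᴴ).trace
        = ((S * Y i * Rᴴ) * (S * Y j * Rᴴ)ᴴ).trace := by
          simp only [mul_assoc, conjTranspose_mul, conjTranspose_conjTranspose]
          rw [trace_mul_comm]
          simp only [mul_assoc]
      _ = (Z * Zᴴ) i j := by
          simp only [trace, diag_apply, mul_apply, Fintype.sum_prod_type]
          rfl
  simp only [hZ]
  exact posSemidef_self_mul_conjTranspose Z

lemma metricTrace_trace_nonneg {n : ℕ} {g : Matrix (Fin n) (Fin n) ℂ} (hg : g.PosDef)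
    {W K : Matrix ι ι ℂ} (hW : W.PosSemidef) (hK : K.PosSemidef) (Y : Fin n → Matrix ι ι ℂ) :
    0 ≤ metricTrace g fun i j => (W * Y i * K * (Y j)ᴴ).trace := by
  refine (trace_mul_nonneg hg.inv.posSemidef (posSemidef_gram_trace hW hK Y)).trans_eq ?_
  simp only [metricTrace, trace, diag_apply, mul_apply, of_apply, smul_eq_mul]
  exact Finset.sum_comm

lemma inv_smul_upsNormP_le [DecidableEq ι] {n : ℕ} {p : ℝ × (Fin n → ℂ)}
    {g : ℝ × (Fin n → ℂ) → Matrix (Fin n) (Fin n) ℂ} {G H : ℝ × (Fin n → ℂ) → Matrix ι ι ℂ}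
    (hG : DifferentiableAt ℝ G p) (hH : DifferentiableAt ℝ H p) (hgpos : (g p).PosDef)
    (hGpos : (G p).PosDef) {Λ : ℝ} (hΛ : 0 < Λ) (hGH : ((Λ : ℂ) • H p - G p).PosSemidef) :
    Λ⁻¹ * (upsNormP g G H G p).re ≤ (upsNormP g G H H p).re := by
  have hslot : metricTrace (g p) (fun i j => ((G p)⁻¹ * chernConnSub (holDirP i) G H p *
      ((Λ : ℂ) • H p - G p) * (chernConnSub (holDirP j) G H p)ᴴ).trace) =
        Λ * upsNormP g G H H p - upsNormP g G H G p := by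
    simp only [upsNormP_eq_metricTrace g _ hG hH, mul_sub, sub_mul, trace_sub, metricTrace_sub,
      Matrix.mul_smul, Matrix.smul_mul, trace_smul]
    simp only [metricTrace, smul_eq_mul, Finset.mul_sum, mul_left_comm]
  have hnonneg := metricTrace_trace_nonneg hgpos hGpos.inv.posSemidef hGH
    fun i => chernConnSub (holDirP i) G H p
  rw [hslot, Complex.le_def] at hnonneg
  rw [inv_mul_le_iff₀ hΛ]
  simpa using hnonneg.1

end Positivity

section BoundedFamilies

open Asymptotics Filter
open scoped Matrix.Norms.L2Operator

variable {X : Type*} {l : Filter X}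

lemma isBigO_one_mul {R : Type*} [NormedRing R] {A B : X → R}
    (hA : A =O[l] fun _ => (1 : ℝ)) (hB : B =O[l] fun _ => (1 : ℝ)) :
    (fun x => A x * B x) =O[l] fun _ => (1 : ℝ) := by
  simpa only [mul_one] using hA.mul hB

lemma isBigO_matrix_iff {ι κ : Type*} [Fintype ι] [Fintype κ] [DecidableEq κ]
    {A : X → Matrix ι κ ℂ} {u : X → ℝ} :
    A =O[l] u ↔ ∀ a b, (fun x => A x a b) =O[l] u := by
  let e := (Matrix.ofLinearEquiv (m := ι) (n := κ) (α := ℂ) ℝ).symm.toContinuousLinearEquiv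
  have he : A =O[l] u ↔ (fun x a b => A x a b) =O[l] u :=
    ⟨(e.isBigO_comp A l).trans, (e.isBigO_comp_rev A l).trans⟩
  simp only [he, isBigO_pi]

variable {ι : Type*} [Fintype ι] [DecidableEq ι] {A : X → Matrix ι ι ℂ}

lemma isBigO_transpose (hA : A =O[l] fun _ => (1 : ℝ)) :
    (fun x => (A x)ᵀ) =O[l] fun _ => (1 : ℝ) :=
  isBigO_matrix_iff.mpr fun a b => isBigO_matrix_iff.mp hA b a

lemma isBigO_conjTranspose (hA : A =O[l] fun _ => (1 : ℝ)) :
    (fun x => (A x)ᴴ) =O[l] fun _ => (1 : ℝ) :=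
  (hA.norm_left.congr_left fun x => (l2_opNorm_conjTranspose (A x)).symm).of_norm_left

lemma isBigO_fromBlocks {A₁₁ A₁₂ A₂₁ A₂₂ : X → Matrix ι ι ℂ}
    (h₁₁ : A₁₁ =O[l] fun _ => (1 : ℝ)) (h₁₂ : A₁₂ =O[l] fun _ => (1 : ℝ))
    (h₂₁ : A₂₁ =O[l] fun _ => (1 : ℝ)) (h₂₂ : A₂₂ =O[l] fun _ => (1 : ℝ)) :
    (fun x => fromBlocks (A₁₁ x) (A₁₂ x) (A₂₁ x) (A₂₂ x)) =O[l] fun _ => (1 : ℝ) := by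
  rw [isBigO_matrix_iff] at *
  rintro (a | a) (b | b) <;> simp only [fromBlocks_apply₁₁, fromBlocks_apply₁₂, fromBlocks_apply₂₁,
    fromBlocks_apply₂₂, *]

/-- The fields `f x` at the points `z x`, their derivatives along the directions in `S`, and their
iterated second derivatives along these, are bounded along the filter `l`. -/
structure JetBounded {E V : Type*} [NormedAddCommGroup E] [NormedSpace ℝ E] [NormedAddCommGroup V]
    [NormedSpace ℂ V] (l : Filter X) (S : Set (E × E)) (f : X → E → V) (z : X → E) : Prop where
  apply : (fun x => f x (z x)) =O[l] fun _ => (1 : ℝ)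
  dirDeriv : ∀ ξ ∈ S, (fun x => dirDeriv ξ (f x) (z x)) =O[l] fun _ => (1 : ℝ)
  dirDeriv_dirDeriv : ∀ ξ ∈ S, ∀ η ∈ S,
    (fun x => _root_.dirDeriv ξ (_root_.dirDeriv η (f x)) (z x)) =O[l] fun _ => (1 : ℝ)

section

variable {n : ℕ} {g β r s s' : X → Matrix (Fin n) (Fin n) ℂ}

lemma isBigO_bFieldTransform (hβ : β =O[l] fun _ => (1 : ℝ)) :
    (fun x => bFieldTransform (β x)) =O[l] fun _ => (1 : ℝ) :=
  isBigO_fromBlocks (isBigO_const_one ℝ 1 l) hβ (isBigO_const_one ℝ 0 l) (isBigO_const_one ℝ 1 l)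

lemma isBigO_genMetric (hgherm : ∀ x, (g x).IsHermitian) (hg : g =O[l] fun _ => (1 : ℝ))
    (hgi : (fun x => (g x)⁻¹) =O[l] fun _ => (1 : ℝ)) (hβ : β =O[l] fun _ => (1 : ℝ)) :
    (fun x => genMetric (g x) (β x)) =O[l] fun _ => (1 : ℝ) := by
  have hP := isBigO_bFieldTransform hβ
  have hzero := isBigO_const_one ℝ (0 : Matrix (Fin n) (Fin n) ℂ) l
  have hdiag := isBigO_fromBlocks hg hzero hzero (isBigO_transpose hgi)
  simp only [genMetric_eq (hgherm _)]
  exact isBigO_one_mul (isBigO_one_mul hP hdiag) (isBigO_conjTranspose hP)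

lemma isBigO_genMetricVariation (hgi : (fun x => (g x)⁻¹) =O[l] fun _ => (1 : ℝ))
    (hβ : β =O[l] fun _ => (1 : ℝ)) (hr : r =O[l] fun _ => (1 : ℝ))
    (hs : s =O[l] fun _ => (1 : ℝ)) (hs' : s' =O[l] fun _ => (1 : ℝ)) :
    (fun x => genMetricVariation (g x) (β x) (r x, s x, s' x)) =O[l] fun _ => (1 : ℝ) := by
  have hP := isBigO_bFieldTransform hβ
  have hgt := isBigO_transpose hgi
  have hgi' := isBigO_one_mul (isBigO_one_mul hgt (isBigO_transpose hr)) hgt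
  exact isBigO_one_mul (isBigO_one_mul hP (isBigO_fromBlocks hr (isBigO_one_mul hs hgt)
    (isBigO_one_mul hgt hs') hgi'.neg_left)) (isBigO_conjTranspose hP)

end

section

variable {E : Type*} [NormedAddCommGroup E] [NormedSpace ℝ E] {S : Set (E × E)} {z : X → E}
  {ξ η : E × E}

lemma isBigO_chernCurv {h : X → E → Matrix ι ι ℂ} (hh : JetBounded l S h z)
    (hhi : (fun x => (h x (z x))⁻¹) =O[l] fun _ => (1 : ℝ)) (hξ : ξ ∈ S) (hη : η ∈ S) :
    (fun x => chernCurv ξ η (h x) (z x)) =O[l] fun _ => (1 : ℝ) :=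
  (hh.dirDeriv_dirDeriv ξ hξ η hη).neg_left.add
    (isBigO_one_mul (isBigO_one_mul (hh.dirDeriv ξ hξ) hhi) (hh.dirDeriv η hη))

variable {n : ℕ} {g β : X → E → Matrix (Fin n) (Fin n) ℂ}

lemma isBigO_nablaSq (hg : JetBounded l S g z) (hβ : JetBounded l S β z)
    (hgi : (fun x => (g x (z x))⁻¹) =O[l] fun _ => (1 : ℝ)) (hξ : ξ ∈ S) (hη : η ∈ S) :
    (fun x => nablaSq ξ η (g x) (β x) (z x)) =O[l] fun _ => (1 : ℝ) :=
  ((hβ.dirDeriv_dirDeriv ξ hξ η hη).sub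
    (isBigO_one_mul (isBigO_one_mul (hg.dirDeriv ξ hξ) hgi) (hβ.dirDeriv η hη))).sub
    (isBigO_one_mul (isBigO_one_mul (hβ.dirDeriv η hη) (isBigO_transpose hgi))
      (isBigO_transpose (hg.dirDeriv ξ hξ)))

lemma isBigO_twistedCurv (hg : JetBounded l S g z) (hβ : JetBounded l S β z)
    (hgi : (fun x => (g x (z x))⁻¹) =O[l] fun _ => (1 : ℝ)) (hξ : ξ ∈ S) (hη : η ∈ S)
    (hξ' : conjDir ξ ∈ S) :
    (fun x => twistedCurv ξ η (g x) (β x) (z x)) =O[l] fun _ => (1 : ℝ) :=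
  (isBigO_chernCurv hg hgi hξ hη).sub
    (isBigO_one_mul (isBigO_one_mul (hβ.dirDeriv η hη) (isBigO_transpose hgi))
      (isBigO_conjTranspose (hβ.dirDeriv _ hξ')))

lemma isBigO_chernCurv_genMetric (hS : ∀ ζ ∈ S, conjDir ζ ∈ S)
    (hgsmooth : ∀ x, ContDiffAt ℝ 2 (g x) (z x)) (hβsmooth : ∀ x, ContDiffAt ℝ 2 (β x) (z x))
    (hgpos : ∀ x, ∀ᶠ w in 𝓝 (z x), (g x w).PosDef)
    (hβanti : ∀ x, ∀ᶠ w in 𝓝 (z x), (β x w)ᵀ = -β x w)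
    (hg : JetBounded l S g z) (hβ : JetBounded l S β z)
    (hgi : (fun x => (g x (z x))⁻¹) =O[l] fun _ => (1 : ℝ)) (hξ : ξ ∈ S) (hη : η ∈ S) :
    (fun x => chernCurv ξ η (fun w => genMetric (g x w) (β x w)) (z x)) =O[l]
      fun _ => (1 : ℝ) := by
  simp only [chernCurv_genMetric ξ η (hgsmooth _) (hβsmooth _) (hgpos _) (hβanti _)]
  exact (isBigO_genMetricVariation hgi hβ.apply
    (isBigO_twistedCurv hg hβ hgi hξ hη (hS ξ hξ)).neg_left (isBigO_nablaSq hg hβ hgi hξ hη)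
    (isBigO_conjTranspose (isBigO_nablaSq hg hβ hgi (hS η hη) (hS ξ hξ)))).neg_left

end

end BoundedFamilies

section BoundedBackground

open Asymptotics Filter
open scoped MatrixOrder Matrix.Norms.L2Operator

variable {X : Type*} {l : Filter X} {n : ℕ}

/-- The directions `∂ᵢ` and `∂_{ī}` on `ℂⁿ`. -/
def wirtingerDirs (n : ℕ) : Set ((Fin n → ℂ) × (Fin n → ℂ)) :=
  Set.range holDir ∪ Set.range fun i => conjDir (holDir i)

lemma holDir_mem_wirtingerDirs (i : Fin n) : holDir i ∈ wirtingerDirs n :=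
  Or.inl ⟨i, rfl⟩

lemma conjDir_mem_wirtingerDirs {ξ : (Fin n → ℂ) × (Fin n → ℂ)} (hξ : ξ ∈ wirtingerDirs n) :
    conjDir ξ ∈ wirtingerDirs n := by
  obtain ⟨i, rfl⟩ | ⟨i, rfl⟩ := hξ
  · exact Or.inr ⟨i, rfl⟩
  · exact Or.inl ⟨i, (conjDir_conjDir _).symm⟩

lemma isBigO_one_of_norm_le {V : Type*} [NormedAddCommGroup V] {f : X → V} {B : ℝ}
    (hf : ∀ x, ‖f x‖ ≤ B) : f =O[l] fun _ => (1 : ℝ) :=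
  IsBigO.of_bound B (Eventually.of_forall fun x => by simpa using hf x)

lemma jetBounded_of_boundedDerivs2 {B : ℝ} {A : X → (Fin n → ℂ) → Matrix (Fin n) (Fin n) ℂ}
    {z : X → Fin n → ℂ} (hA : ∀ x, ContDiffAt ℝ 2 (A x) (z x))
    (hB : ∀ x a b, BoundedDerivs2 B (fun w => A x w a b) (z x)) :
    JetBounded l (wirtingerDirs n) A z where
  apply := isBigO_matrix_iff.mpr fun a b => isBigO_one_of_norm_le fun x => (hB x a b).1
  dirDeriv ξ hξ := isBigO_matrix_iff.mpr fun a b => isBigO_one_of_norm_le fun x => by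
    have h := (hB x a b).2.1
    simp only [wd_eq_dirDeriv, wdb_eq_dirDeriv] at h
    rw [dirDeriv_apply_apply ξ ((hA x).differentiableAt two_ne_zero)]
    obtain ⟨i, rfl⟩ | ⟨i, rfl⟩ := hξ
    exacts [(h i).1, (h i).2]
  dirDeriv_dirDeriv ξ hξ η hη :=
    isBigO_matrix_iff.mpr fun a b => isBigO_one_of_norm_le fun x => by
      have h := (hB x a b).2.2
      simp only [wd_eq_dirDeriv, wdb_eq_dirDeriv] at h
      rw [dirDeriv_dirDeriv_apply_apply ξ η (hA x)]
      obtain ⟨i, rfl⟩ | ⟨i, rfl⟩ := hξ <;> obtain ⟨j, rfl⟩ | ⟨j, rfl⟩ := hη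
      exacts [(h i j).1, (h i j).2.1, (h i j).2.2.1, (h i j).2.2.2]

lemma isBigO_of_posSemidef_sub {ι : Type*} [Fintype ι] [DecidableEq ι] {G H : X → Matrix ι ι ℂ}
    (hG : ∀ x, (G x).PosSemidef) (hGH : ∀ x, (H x - G x).PosSemidef) : G =O[l] H :=
  IsBigO.of_bound' (Eventually.of_forall fun x =>
    CStarAlgebra.norm_le_norm_of_nonneg_of_le (hG x).nonneg (Matrix.le_iff.mpr (hGH x)))

lemma isBigO_metricTrace_trace_mul {ι : Type*} [Fintype ι] [DecidableEq ι]
    {g : X → Matrix (Fin n) (Fin n) ℂ} {M : X → Matrix ι ι ℂ}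
    {T : X → Fin n → Fin n → Matrix ι ι ℂ} (hgi : (fun x => (g x)⁻¹) =O[l] fun _ => (1 : ℝ))
    (hM : M =O[l] fun _ => (1 : ℝ)) (hT : ∀ i j, (fun x => T x i j) =O[l] fun _ => (1 : ℝ)) :
    (fun x => metricTrace (g x) fun i j => (M x * T x i j).trace) =O[l] fun _ => (1 : ℝ) :=
  IsBigO.fun_sum fun i _ => IsBigO.fun_sum fun j _ =>
    isBigO_one_mul (isBigO_matrix_iff.mp hgi j i)
      (((Matrix.traceLinearMap ι ℂ ℂ).toContinuousLinearMap.isBigO_comp _ l).trans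
        (isBigO_one_mul hM (hT i j)))

section

variable {g β : X → Matrix (Fin n) (Fin n) ℂ}

lemma isBigO_inv_genMetric (hgpos : ∀ x, (g x).PosDef) (hβanti : ∀ x, (β x)ᵀ = -β x)
    (hG : (fun x => genMetric (g x) (β x)) =O[l] fun _ => (1 : ℝ)) :
    (fun x => (genMetric (g x) (β x))⁻¹) =O[l] fun _ => (1 : ℝ) := by
  simp only [inv_genMetric (hgpos _) (hβanti _)]
  exact isBigO_matrix_iff.mpr fun a b => isBigO_matrix_iff.mp hG b.swap a.swap

lemma isBigO_inv_of_genMetric (hgherm : ∀ x, (g x).IsHermitian)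
    (hG : (fun x => genMetric (g x) (β x)) =O[l] fun _ => (1 : ℝ)) :
    (fun x => (g x)⁻¹) =O[l] fun _ => (1 : ℝ) := by
  have hblock (x : X) (a b : Fin n) :
      (g x)⁻¹ a b = genMetric (g x) (β x) (Sum.inr b) (Sum.inr a) := by
    rw [genMetric, inv_map_conj (hgherm x)]
    rfl
  refine isBigO_matrix_iff.mpr fun a b => ?_
  simp only [hblock]
  exact isBigO_matrix_iff.mp hG _ _

end

/-- The pair `(gt, βt)` defines, near `z`, a generalized metric of class `C²`; its second-order jet
at `z` and the inverse of `gt z` are bounded by `B`, entry by entry. -/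
structure BoundedBackgroundAt (B : ℝ) (gt βt : (Fin n → ℂ) → Matrix (Fin n) (Fin n) ℂ)
    (z : Fin n → ℂ) : Prop where
  contDiffAt_metric : ∀ a b, ContDiffAt ℝ 2 (fun w => gt w a b) z
  contDiffAt_potential : ∀ a b, ContDiffAt ℝ 2 (fun w => βt w a b) z
  posDef : ∀ᶠ w in 𝓝 z, (gt w).PosDef
  antisymm : ∀ᶠ w in 𝓝 z, (βt w)ᵀ = -βt w
  metric_le : ∀ a b, BoundedDerivs2 B (fun w => gt w a b) z
  inv_metric_le : ∀ a b, ‖(gt z)⁻¹ a b‖ ≤ B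
  potential_le : ∀ a b, BoundedDerivs2 B (fun w => βt w a b) z

section

variable {B Λ : ℝ} {gt βt : X → (Fin n → ℂ) → Matrix (Fin n) (Fin n) ℂ} {z : X → Fin n → ℂ}

lemma isBigO_genMetric_background (h : ∀ x, BoundedBackgroundAt B (gt x) (βt x) (z x)) :
    (fun x => genMetric (gt x (z x)) (βt x (z x))) =O[l] fun _ => (1 : ℝ) :=
  isBigO_genMetric (fun x => (h x).posDef.self_of_nhds.isHermitian)
    (isBigO_matrix_iff.mpr fun a b => isBigO_one_of_norm_le fun x => ((h x).metric_le a b).1)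
    (isBigO_matrix_iff.mpr fun a b => isBigO_one_of_norm_le fun x => (h x).inv_metric_le a b)
    (isBigO_matrix_iff.mpr fun a b => isBigO_one_of_norm_le fun x => ((h x).potential_le a b).1)

lemma isBigO_chernCurv_background (h : ∀ x, BoundedBackgroundAt B (gt x) (βt x) (z x))
    (i j : Fin n) :
    (fun x => chernCurv (holDir i) (conjDir (holDir j))
      (fun w => genMetric (gt x w) (βt x w)) (z x)) =O[l] fun _ => (1 : ℝ) := by
  have hg (x : X) := contDiffAt_matrix_iff.mpr (h x).contDiffAt_metric
  have hβ (x : X) := contDiffAt_matrix_iff.mpr (h x).contDiffAt_potential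
  exact isBigO_chernCurv_genMetric (fun ζ => conjDir_mem_wirtingerDirs) hg hβ
    (fun x => (h x).posDef) (fun x => (h x).antisymm)
    (jetBounded_of_boundedDerivs2 hg fun x => (h x).metric_le)
    (jetBounded_of_boundedDerivs2 hβ fun x => (h x).potential_le)
    (isBigO_matrix_iff.mpr fun a b => isBigO_one_of_norm_le fun x => (h x).inv_metric_le a b)
    (holDir_mem_wirtingerDirs i) (conjDir_mem_wirtingerDirs (holDir_mem_wirtingerDirs j))

lemma isBigO_metricTrace_chernCurv_background {g β : X → Matrix (Fin n) (Fin n) ℂ}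
    (hgpos : ∀ x, (g x).PosDef) (hβanti : ∀ x, (β x)ᵀ = -β x)
    (h : ∀ x, BoundedBackgroundAt B (gt x) (βt x) (z x))
    (hle : ∀ x, ((Λ : ℂ) • genMetric (gt x (z x)) (βt x (z x)) -
      genMetric (g x) (β x)).PosSemidef) :
    (fun x => metricTrace (g x) fun i j => ((genMetric (g x) (β x))⁻¹ *
      chernCurv (holDir i) (conjDir (holDir j)) (fun w => genMetric (gt x w) (βt x w))
        (z x)).trace) =O[l] fun _ => (1 : ℝ) := by
  have hG : (fun x => genMetric (g x) (β x)) =O[l] fun _ => (1 : ℝ) :=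
    (isBigO_of_posSemidef_sub (fun x => (posDef_genMetric (hgpos x) _).posSemidef) hle).trans
      ((isBigO_genMetric_background h).const_smul_left (Λ : ℂ))
  exact isBigO_metricTrace_trace_mul
    (isBigO_inv_of_genMetric (fun x => (hgpos x).isHermitian) hG)
    (isBigO_inv_genMetric hgpos hβanti hG) (isBigO_chernCurv_background h)

end

/-- The bound is uniform because the previous lemma applies to the family of all admissible data. -/
lemma exists_norm_metricTrace_chernCurv_le (n : ℕ) (Λ B : ℝ) :
    ∃ K, ∀ (g β : Matrix (Fin n) (Fin n) ℂ) (gt βt : (Fin n → ℂ) → Matrix (Fin n) (Fin n) ℂ)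
      (z : Fin n → ℂ), g.PosDef → βᵀ = -β → BoundedBackgroundAt B gt βt z →
      ((Λ : ℂ) • genMetric (gt z) (βt z) - genMetric g β).PosSemidef →
      ‖metricTrace g fun i j => ((genMetric g β)⁻¹ * chernCurv (holDir i) (conjDir (holDir j))
        (fun w => genMetric (gt w) (βt w)) z).trace‖ ≤ K := by
  let Mat := Matrix (Fin n) (Fin n) ℂ
  let X := {x : Mat × Mat × ((Fin n → ℂ) → Mat) × ((Fin n → ℂ) → Mat) × (Fin n → ℂ) //
    x.1.PosDef ∧ x.2.1ᵀ = -x.2.1 ∧ BoundedBackgroundAt B x.2.2.1 x.2.2.2.1 x.2.2.2.2 ∧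
      ((Λ : ℂ) • genMetric (x.2.2.1 x.2.2.2.2) (x.2.2.2.1 x.2.2.2.2) -
        genMetric x.1 x.2.1).PosSemidef}
  have hbdd := isBigO_metricTrace_chernCurv_background (l := ⊤) (fun x : X => x.2.1)
    (fun x => x.2.2.1) (fun x => x.2.2.2.1) (fun x => x.2.2.2.2)
  obtain ⟨K, hK⟩ := isBigO_top.mp hbdd
  exact ⟨K, fun g β gt βt z hg hβ h hle => by
    simpa using hK ⟨(g, β, gt, βt, z), hg, hβ, h, hle⟩⟩

end BoundedBackground

section TraceHeatInequality

open scoped Matrix.Norms.L2Operator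

variable {n : ℕ} {p : ℝ × (Fin n → ℂ)}

lemma dirDeriv_timeDir_comp_snd {V : Type*} [NormedAddCommGroup V] [NormedSpace ℂ V]
    {f : (Fin n → ℂ) → V} (hf : DifferentiableAt ℝ f p.2) :
    dirDeriv (timeDir n) (fun q : ℝ × (Fin n → ℂ) => f q.2) p = 0 :=
  (dirDeriv_comp_clm (timeDir n) (ContinuousLinearMap.snd ℝ ℝ (Fin n → ℂ)) hf).trans
    (by simp [dirDeriv, timeDir])

lemma chernCurv_comp_snd {ι : Type*} [Fintype ι] [DecidableEq ι]
    {H : (Fin n → ℂ) → Matrix ι ι ℂ} (hH : ContDiffAt ℝ 2 H p.2) (i j : Fin n) :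
    chernCurv (holDirP i) (conjDir (holDirP j)) (fun q => H q.2) p =
      chernCurv (holDir i) (conjDir (holDir j)) H p.2 :=
  chernCurv_comp_clm (holDirP i) (conjDir (holDirP j)) (ContinuousLinearMap.snd ℝ ℝ (Fin n → ℂ)) hH

/-- `(g, β)` is of class `C²` near the space-time point `p`, with `g` a Hermitian metric and `β` a
two-form there, and satisfies at `p` the torsion potential and pluriclosed flow equations. -/
structure PluriclosedFlowAt (g β : ℝ × (Fin n → ℂ) → Matrix (Fin n) (Fin n) ℂ)
    (p : ℝ × (Fin n → ℂ)) : Prop where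
  contDiffAt_metric : ∀ a b, ContDiffAt ℝ 2 (fun q => g q a b) p
  contDiffAt_potential : ∀ a b, ContDiffAt ℝ 2 (fun q => β q a b) p
  posDef : ∀ᶠ q in 𝓝 p, (g q).PosDef
  antisymm : ∀ᶠ q in 𝓝 p, (β q)ᵀ = -β q
  torsion : ∀ i j k, wdbP k (fun q => β q i j) p = torsionP g i j k p
  flow_metric : ∀ i j, dtP (fun q => g q i j) p = -traceChernP g g i j p + torsionSqP g i j p
  flow_potential : ∀ i j, dtP (fun q => β q i j) p = lapBetaP g β i j p

theorem trace_heat_inequality_general (n : ℕ) (Λ B : ℝ) (hΛ : 0 < Λ) :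
    ∃ K : ℝ, ∀ (g β : ℝ × (Fin n → ℂ) → Matrix (Fin n) (Fin n) ℂ)
      (gt βt : (Fin n → ℂ) → Matrix (Fin n) (Fin n) ℂ) (p : ℝ × (Fin n → ℂ)),
      PluriclosedFlowAt g β p → BoundedBackgroundAt B gt βt p.2 →
      ((Λ : ℂ) • genMetric (gt p.2) (βt p.2) - genMetric (g p) (β p)).PosSemidef →
      (dtP (fun q => ((genMetric (g q) (β q))⁻¹ * genMetric (gt q.2) (βt q.2)).trace) p
        - lapP g (fun q => ((genMetric (g q) (β q))⁻¹ * genMetric (gt q.2) (βt q.2)).trace) p).re ≤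
        -Λ⁻¹ * (upsNormP g (fun q => genMetric (g q) (β q))
          (fun q => genMetric (gt q.2) (βt q.2)) (fun q => genMetric (g q) (β q)) p).re + K := by
  obtain ⟨K, hK⟩ := exists_norm_metricTrace_chernCurv_le n Λ B
  refine ⟨K, fun g β gt βt p hflow hback hle => ?_⟩
  have hg := contDiffAt_matrix_iff.mpr hflow.contDiffAt_metric
  have hβ := contDiffAt_matrix_iff.mpr hflow.contDiffAt_potential
  have hgpos := hflow.posDef.self_of_nhds
  have hG := contDiffAt_genMetric hg hβ hflow.posDef
  have hGt := contDiffAt_genMetric (contDiffAt_matrix_iff.mpr hback.contDiffAt_metric)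
    (contDiffAt_matrix_iff.mpr hback.contDiffAt_potential) hback.posDef
  have hH : ContDiffAt ℝ 2 (fun q : ℝ × (Fin n → ℂ) => genMetric (gt q.2) (βt q.2)) p :=
    hGt.comp p contDiffAt_snd
  have hHpos : ∀ᶠ q in 𝓝 p, (genMetric (gt q.2) (βt q.2)).PosDef :=
    (continuousAt_snd.eventually hback.posDef).mono fun q hq => posDef_genMetric hq _
  have hheat := heat_trace_inv_mul (g := g) hG hH
    (hflow.posDef.mono fun q hq => posDef_genMetric hq _) hHpos
    (dirDeriv_timeDir_genMetric hg hβ hflow.posDef hflow.antisymm hflow.torsion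
      hflow.flow_metric hflow.flow_potential)
    (dirDeriv_timeDir_comp_snd (hGt.differentiableAt two_ne_zero))
  have hgood := inv_smul_upsNormP_le (hG.differentiableAt two_ne_zero)
    (hH.differentiableAt two_ne_zero) hgpos (posDef_genMetric hgpos _) hΛ hle
  have hcurv := (Complex.re_le_norm _).trans
    (hK (g p) (β p) gt βt p.2 hgpos hflow.antisymm.self_of_nhds hback hle)
  simp only [chernCurv_comp_snd hGt] at hheat
  rw [hheat, Complex.add_re, Complex.neg_re]
  linarith

end TraceHeatInequality

/-- Corollary 3.7: along pluriclosed flow, if `Λ⁻¹·G̃ ≤ G ≤ Λ·G̃`, then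
`(∂ₜ − Δ)(tr(G⁻¹·G̃)) ≤ −Λ⁻¹·|Υ|²_{g⁻¹,G⁻¹,G} + K`, where `K` depends only on `n`, `Λ`,
and an upper bound `B` on `U` for the entries of `g̃`, `g̃⁻¹`, `β̃` and their Wirtinger
derivatives up to order two. -/
theorem trace_heat_inequality (n : ℕ) (hn : 0 < n) (Λ B : ℝ) (hΛ : 1 ≤ Λ) :
    ∃ K : ℝ,
      ∀ (I : Set ℝ), IsOpen I → ∀ (U : Set (Fin n → ℂ)), IsOpen U →
      ∀ g β : ℝ × (Fin n → ℂ) → Matrix (Fin n) (Fin n) ℂ,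
      ∀ gt βt : (Fin n → ℂ) → Matrix (Fin n) (Fin n) ℂ,
        (∀ a b : Fin n, ContDiffOn ℝ (⊤ : ℕ∞) (fun q => g q a b) (I ×ˢ U)) →
        (∀ a b : Fin n, ContDiffOn ℝ (⊤ : ℕ∞) (fun q => β q a b) (I ×ˢ U)) →
        (∀ a b : Fin n, ContDiffOn ℝ (⊤ : ℕ∞) (fun z => gt z a b) U) →
        (∀ a b : Fin n, ContDiffOn ℝ (⊤ : ℕ∞) (fun z => βt z a b) U) →
        (∀ p ∈ I ×ˢ U, (g p).PosDef) →
        (∀ p ∈ I ×ˢ U, (β p)ᵀ = -(β p)) →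
        (∀ z ∈ U, (gt z).PosDef) →
        (∀ z ∈ U, (βt z)ᵀ = -(βt z)) →
        -- β is a torsion potential for g
        (∀ p ∈ I ×ˢ U, ∀ i j k : Fin n,
          wdbP k (fun q => β q i j) p = torsionP g i j k p) →
        -- pluriclosed flow equations
        (∀ p ∈ I ×ˢ U, ∀ i j : Fin n,
          dtP (fun q => g q i j) p = - traceChernP g g i j p + torsionSqP g i j p) →
        (∀ p ∈ I ×ˢ U, ∀ i j : Fin n,
          dtP (fun q => β q i j) p = lapBetaP g β i j p) →
        -- uniform equivalence Λ⁻¹·G̃ ≤ G ≤ Λ·G̃ of the generalized metrics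
        (∀ p ∈ I ×ˢ U,
          (genMetric (g p) (β p) - ((Λ : ℂ))⁻¹ • genMetric (gt p.2) (βt p.2)).PosSemidef ∧
          ((Λ : ℂ) • genMetric (gt p.2) (βt p.2) - genMetric (g p) (β p)).PosSemidef) →
        -- bounds on the background up to order two
        (∀ z ∈ U, ∀ a b : Fin n,
          BoundedDerivs2 B (fun w => gt w a b) z ∧
          BoundedDerivs2 B (fun w => (gt w)⁻¹ a b) z ∧
          BoundedDerivs2 B (fun w => βt w a b) z) →
        ∀ p ∈ I ×ˢ U,
          (dtP (fun q => Matrix.trace ((genMetric (g q) (β q))⁻¹ * genMetric (gt q.2) (βt q.2))) p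
            - lapP g (fun q =>
                Matrix.trace ((genMetric (g q) (β q))⁻¹ * genMetric (gt q.2) (βt q.2))) p).re ≤
            - Λ⁻¹ * (upsNormP g (fun q => genMetric (g q) (β q))
                (fun q => genMetric (gt q.2) (βt q.2)) (fun q => genMetric (g q) (β q)) p).re
              + K := by
  have htwo : (2 : WithTop ℕ∞) ≤ (⊤ : ℕ∞) := WithTop.coe_le_coe.mpr le_top
  obtain ⟨K, hK⟩ := trace_heat_inequality_general n Λ B (one_pos.trans_le hΛ)
  refine ⟨K, fun I hI U hU g β gt βt hg hβ hgt hβt hgpos hβanti hgtpos hβtanti htorsion hflowg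
    hflowβ hequiv hbound p hp => hK g β gt βt p ?_ ?_ (hequiv p hp).2⟩
  · have hIU := (hI.prod hU).mem_nhds hp
    exact {
      contDiffAt_metric := fun a b => ((hg a b).contDiffAt hIU).of_le htwo
      contDiffAt_potential := fun a b => ((hβ a b).contDiffAt hIU).of_le htwo
      posDef := Filter.eventually_of_mem hIU hgpos
      antisymm := Filter.eventually_of_mem hIU hβanti
      torsion := htorsion p hp
      flow_metric := hflowg p hp
      flow_potential := hflowβ p hp }
  · have hUp := hU.mem_nhds hp.2
    exact {
      contDiffAt_metric := fun a b => ((hgt a b).contDiffAt hUp).of_le htwo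
      contDiffAt_potential := fun a b => ((hβt a b).contDiffAt hUp).of_le htwo
      posDef := Filter.eventually_of_mem hUp hgtpos
      antisymm := Filter.eventually_of_mem hUp hβtanti
      metric_le := fun a b => (hbound p.2 hp.2 a b).1
      inv_metric_le := fun a b => (hbound p.2 hp.2 a b).2.1.1
      potential_le := fun a b => (hbound p.2 hp.2 a b).2.2 }
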